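/- arXiv:0806.4318 — 2 statements merged into one kernel-verified Lean document; each statement's English description precedes it below -/
import Mathlib

section
/- The number of lattice walks of length 3n in the quarter plane Z≥0 × Z≥0, starting and ending at the origin (0,0), using only steps from S = {(-1,0), (0,-1), (1,1)}, equals 4^n / ((n+1)(2n+1)) · C(3n, n). -/
open Finset

/-- Number of quarter-plane walks of length `m` from `(0,0)` to `e` with steps in `S`:
sequences of `m` steps, each in `S`, all partial sums having nonnegative coordinates,
with total sum `e`. -/
noncomputable def qpWalks (S : Set (ℤ × ℤ)) (m : ℕ) (e : ℤ × ℤ) : ℕ :=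
  Nat.card {f : Fin m → ℤ × ℤ //
    (∀ i, f i ∈ S) ∧
    (∀ k : ℕ,
      0 ≤ (∑ i ∈ Finset.univ.filter (fun i : Fin m => (i : ℕ) < k), f i).1 ∧
      0 ≤ (∑ i ∈ Finset.univ.filter (fun i : Fin m => (i : ℕ) < k), f i).2) ∧
    (∑ i, f i) = e}

/-!
Let `Q(x, y)` be the generating function of the walks by endpoint. Splitting off the last step gives
the kernel equation `K Q = x y - t x Q(x, 0) - t y Q(0, y)` with
`K = x y (1 - t (1 / x + 1 / y + x y))`, and this equation determines all coefficients of `Q`.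
We guess that `q(x) = Q(x, 0) = Q(0, x)` satisfies the quadratic equation
`2 t (q(x) - q(0)) = x (q(x) - 1) - t² x² q(x)²`. Given a solution `q`, put `d = x q(x) - y q(y)`.
Subtracting the equations in `x` and `y` shows that `Q = d / (x - y - t x y d)` solves the kernel
equation, so the walks are counted by `Q`.
The quadratic equation is solved rationally in `b = 1 + 4 t³ b³` and `c = 1 + x t² b² c²`, and at
`x = 0` the solution is `q(0) = b - 2 t³ b⁴ = (3 b - b²) / 2`, whose coefficients are Fuss–Catalan
numbers.
-/

open PowerSeries

lemma exists_eq_one_add_mul_pow {R : Type*} [CommRing R] {I : Ideal R} [HenselianRing R I]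
    {z : R} (hz : z ∈ I) (p : ℕ) : ∃ b : R, b = 1 + z * b ^ p := by
  obtain _ | p := p
  · exact ⟨1 + z, by ring⟩
  let P : Polynomial R := .X ^ (p + 1) - (.X ^ p - .C z)
  have hP_monic : P.Monic := Polynomial.monic_X_pow_sub <|
    (show (.X ^ p - .C z : Polynomial R).degree ≤ p by compute_degree!).trans_lt <|
      mod_cast p.lt_succ_self
  have hP_one : P.eval 1 ∈ I := by simpa [P] using hz
  have hP_deriv : P.derivative.eval 1 = 1 := by simp [P, Polynomial.derivative_X_pow]
  obtain ⟨a, ha_root, ha_mem⟩ :=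
    HenselianRing.is_henselian P hP_monic 1 hP_one (by simp [hP_deriv])
  replace ha_root : a ^ (p + 1) = a ^ p - z := by
    simpa [P, Polynomial.IsRoot.def, sub_eq_zero] using ha_root
  have ha_unit : IsUnit a := by
    simpa using Ideal.mem_jacobson_bot.1 (HenselianRing.jac ha_mem) 1
  obtain ⟨b, hab⟩ := ha_unit.exists_right_inv
  have hab_pow (m : ℕ) : a ^ m * b ^ m = 1 := by rw [← mul_pow, hab, one_pow]
  refine ⟨b, ?_⟩
  linear_combination -b ^ (p + 1) * ha_root - b * hab_pow p + hab_pow (p + 1)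

lemma natCast_mul_coeff_fussCatalan_pow {R : Type*} [CommRing R] [IsDomain R] [CharZero R] {k p : ℕ}
    (hk : k ≠ 0) (hp : p ≠ 0) {c : R} {B : R⟦X⟧} (hB : B = 1 + C c * X ^ k * B ^ p) (n r : ℕ) :
    ((p * n + r : ℕ) : R) * coeff (k * n) (B ^ r) = r * c ^ n * (p * n + r).choose n := by
  induction n generalizing r with
  | zero =>
    have hB₀ : constantCoeff B = 1 := by
      simpa [hk] using congrArg constantCoeff hB
    simp [hB₀]
  | succ n ihn =>
    induction r with
    | zero => simp [coeff_one, hk]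
    | succ r ihr =>
      have hN : ((p * (n + 1) + r : ℕ) : R) ≠ 0 := by
        exact_mod_cast (by positivity : p * (n + 1) + r ≠ 0)
      have hcoeff : coeff (k * (n + 1)) (B ^ (r + 1)) =
          coeff (k * (n + 1)) (B ^ r) + c * coeff (k * n) (B ^ (p + r)) := by
        have hpow : B ^ (r + 1) = B ^ r + C c * (X ^ k * B ^ (p + r)) := by
          linear_combination B ^ r * hB
        rw [hpow, map_add, coeff_C_mul, mul_add_one, coeff_X_pow_mul]
      have ihn := ihn (p + r)
      have hpascal := Nat.choose_succ_succ' (p * (n + 1) + r) n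
      have habsorb := Nat.add_one_mul_choose_eq (p * (n + 1) + r) n
      rw [← add_assoc, ← mul_add_one] at ihn
      apply_fun ((↑) : ℕ → R) at hpascal habsorb
      apply mul_left_cancel₀ hN
      rw [hcoeff, ← add_assoc]
      push_cast at ihr ihn hpascal habsorb ⊢
      linear_combination (p * (n + 1) + r + 1 : R) * ihr + (p * (n + 1) + r + 1 : R) * c * ihn
        - (p * (n + 1) + r + 1 : R) * r * c ^ (n + 1) * hpascal + p * c ^ (n + 1) * habsorb

lemma coeff_kreweras_of_fussCatalan {B : ℚ⟦X⟧} (hB : B = 1 + C 4 * X ^ 3 * B ^ 3) (n : ℕ) :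
    coeff (3 * n) (B * (1 - 2 * X ^ 3 * B ^ 3) : ℚ⟦X⟧) =
      4 ^ n / ((n + 1) * (2 * n + 1)) * (3 * n).choose n := by
  have htwice : C 2 * (B * (1 - 2 * X ^ 3 * B ^ 3)) = C 3 * B ^ 1 - B ^ 2 := by
    simp only [map_ofNat] at hB ⊢
    linear_combination B * hB
  replace htwice := congrArg (coeff (3 * n)) htwice
  rw [map_sub, coeff_C_mul, coeff_C_mul] at htwice
  have h₁ := natCast_mul_coeff_fussCatalan_pow three_ne_zero three_ne_zero hB n 1
  have h₂ := natCast_mul_coeff_fussCatalan_pow three_ne_zero three_ne_zero hB n 2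
  have hchoose₁ : ((3 * n + 1).choose n : ℚ) * (2 * n + 1) = (3 * n).choose n * (3 * n + 1) := by
    have := Nat.choose_mul_succ_eq (3 * n) n
    rw [show 3 * n + 1 - n = 2 * n + 1 by omega] at this
    exact_mod_cast this.symm
  have hchoose₂ : ((3 * n + 2).choose n : ℚ) * (2 * n + 2) =
      (3 * n + 1).choose n * (3 * n + 2) := by
    have := Nat.choose_mul_succ_eq (3 * n + 1) n
    rw [show 3 * n + 1 + 1 - n = 2 * n + 2 by omega] at this
    exact_mod_cast this.symm
  push_cast at h₁ h₂
  rw [← eq_div_iff (by positivity)] at hchoose₁ hchoose₂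
  rw [mul_comm, ← eq_div_iff (by positivity)] at h₁ h₂
  rw [h₁, h₂, hchoose₂, hchoose₁] at htwice
  apply mul_left_cancel₀ (two_ne_zero' ℚ)
  rw [htwice]
  field_simp
  ring

section Kernel

variable {R : Type*} [CommRing R]

/-- The quadratic equation for the series `q` of the walks ending on the axis `y = 0`, where `x`
marks the abscissa of the endpoint, `t` the length, and `f` stands for `q` at `x = 0`. -/
def CatalyticEq (t x q f : R) : Prop :=
  2 * t * (q - f) = x * (q - 1) - t ^ 2 * x ^ 2 * q ^ 2

lemma CatalyticEq.map {S : Type*} [CommRing S] (φ : R →+* S) {t x q f : R}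
    (h : CatalyticEq t x q f) : CatalyticEq (φ t) (φ x) (φ q) (φ f) := by
  simpa [CatalyticEq, map_ofNat] using congrArg φ h

lemma catalyticEq_of_param {t x b c : R} (hb : b = 1 + 4 * t ^ 3 * b ^ 3)
    (hc : c = 1 + x * (t ^ 2 * b ^ 2) * c ^ 2) :
    CatalyticEq t x (b * (c - 2 * t ^ 3 * b ^ 3 * c ^ 2)) (b * (1 - 2 * t ^ 3 * b ^ 3)) := by
  obtain ⟨p, hp⟩ : ∃ p, 2 * t ^ 3 * b ^ 3 = p := ⟨_, rfl⟩
  have hbp : b = 1 + 2 * p := by linear_combination hb + 2 * hp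
  have hleft : 2 * t * (b * (c - p * c ^ 2) - b * (1 - p)) = x * p * c ^ 2 * (1 - p - p * c) := by
    linear_combination 2 * t * b * (1 - p - p * c) * hc + x * c ^ 2 * (1 - p - p * c) * hp
  have hright : x * (b * (c - p * c ^ 2) - 1) - t ^ 2 * x ^ 2 * (b * (c - p * c ^ 2)) ^ 2 =
      x * p * c ^ 2 * (1 - p - p * c) := by
    linear_combination x * (c - p * c ^ 2) * hbp + x * (1 - p * c) ^ 2 * hc
  rw [CatalyticEq, hp, hleft, hright]

lemma exists_catalyticEq {B : R⟦X⟧} (hB : B = 1 + C 4 * X ^ 3 * B ^ 3) :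
    ∃ q : R⟦X⟧⟦X⟧, constantCoeff q = B * (1 - 2 * X ^ 3 * B ^ 3) ∧
      CatalyticEq (C X) X q (C (constantCoeff q)) := by
  obtain ⟨c, hc⟩ := exists_eq_one_add_mul_pow
    (Ideal.mul_mem_right (C (X ^ 2 * B ^ 2)) _ (Ideal.mem_span_singleton_self (X : R⟦X⟧⟦X⟧))) 2
  have hc₀ : constantCoeff c = 1 := by simpa using congrArg constantCoeff hc
  have hq₀ : constantCoeff (C B * (c - 2 * C X ^ 3 * C B ^ 3 * c ^ 2)) =
      B * (1 - 2 * X ^ 3 * B ^ 3) := by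
    simp [hc₀, map_ofNat]
  have hb : (C B : R⟦X⟧⟦X⟧) = 1 + 4 * C X ^ 3 * C B ^ 3 := by
    simpa [map_ofNat] using congrArg C hB
  refine ⟨_, hq₀, ?_⟩
  rw [hq₀]
  simpa [map_ofNat] using catalyticEq_of_param hb (by simpa using hc)

/-- The kernel `x y (1 - t (1 / x + 1 / y + x y))` of Kreweras' step set, with denominators
cleared. -/
def krewerasKernel (t x y : R) : R :=
  x * y - t * (x + y + x ^ 2 * y ^ 2)

lemma CatalyticEq.krewerasKernel_mul {t x y a b f : R} (ha : CatalyticEq t x a f)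
    (hb : CatalyticEq t y b f) :
    krewerasKernel t x y * (x * a - y * b) =
      (x * y - t * (x * a) - t * (y * b)) * (x - y - t * x * y * (x * a - y * b)) := by
  unfold CatalyticEq at ha hb
  unfold krewerasKernel
  linear_combination x * y * (hb - ha)

lemma CatalyticEq.krewerasKernel_mul_eq [IsDomain R] {t x y a b f n e : R}
    (ha : CatalyticEq t x a f) (hb : CatalyticEq t y b f) (hxy : x ≠ y)
    (hn : (x - y) * n = x * a - y * b) (he : (1 - t * x * y * n) * e = 1) :
    krewerasKernel t x y * (n * e) = x * y - t * (x * a) - t * (y * b) := by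
  apply mul_left_cancel₀ (sub_ne_zero.2 hxy)
  linear_combination e * ha.krewerasKernel_mul hb + krewerasKernel t x y * e * hn
    + (x * y - t * (x * a) - t * (y * b)) * (t * x * y * e * hn + (x - y) * he)

/-- The divided difference `(x q(x) - y q(y)) / (x - y) = ∑ qᵢ₊ⱼ xⁱ yʲ`, where the inner variable is
`x` and the outer one is `y`. -/
noncomputable def hankelSeries (q : R⟦X⟧) : R⟦X⟧⟦X⟧ :=
  mk fun j => mk fun i => coeff (i + j) q

lemma C_X_sub_X_mul_hankelSeries (q : R⟦X⟧) :
    (C X - X) * hankelSeries q = C X * C q - X * PowerSeries.map C q := by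
  ext j i
  obtain _ | j := j <;> obtain _ | i := i <;>
    simp [sub_mul, hankelSeries, coeff_succ_X_mul, add_right_comm, ← add_assoc]

lemma CatalyticEq.exists_krewerasKernel_mul_eq [IsDomain R] {t : R} {q : R⟦X⟧}
    (hq : CatalyticEq (C t) X q (C (constantCoeff q))) :
    ∃ Q : R⟦X⟧⟦X⟧, coeff 0 (coeff 0 Q) = constantCoeff q ∧
      krewerasKernel (C (C t)) (C X) X * Q =
        C X * X - C (C t) * (C X * C q) - C (C t) * (X * PowerSeries.map C q) := by
  have hD : IsUnit (1 - C (C t) * C X * X * hankelSeries q) :=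
    isUnit_iff_constantCoeff.2 <| by simp
  obtain ⟨E, hDE⟩ := hD.exists_right_inv
  have hXY : (C X : R⟦X⟧⟦X⟧) ≠ X := fun h => by
    simpa [coeff_C] using congrArg (fun g => coeff 0 (coeff 1 g)) h
  have hqx : CatalyticEq (C (C t)) (C X) (C q) (C (C (constantCoeff q))) :=
    hq.map (C (R := R⟦X⟧))
  have hqy : CatalyticEq (C (C t)) X (PowerSeries.map C q) (C (C (constantCoeff q))) := by
    simpa using hq.map (PowerSeries.map (C (R := R)))
  have hE : constantCoeff (constantCoeff E) = 1 := by
    simpa using congrArg (fun g => constantCoeff (constantCoeff g)) hDE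
  have hQ₀ : coeff 0 (coeff 0 (hankelSeries q * E)) = constantCoeff q := by
    simp [hankelSeries, hE]
  have hQ := hqx.krewerasKernel_mul_eq hqy hXY (C_X_sub_X_mul_hankelSeries q) hDE
  exact ⟨_, hQ₀, hQ⟩

lemma coeff_of_krewerasKernel_mul_eq {t : R} {a b : R⟦X⟧} {Q : R⟦X⟧⟦X⟧}
    (hQ : krewerasKernel (C (C t)) (C X) X * Q =
      C X * X - C (C t) * (C X * C a) - C (C t) * (X * PowerSeries.map C b)) (i j : ℕ) :
    coeff i (coeff j Q) = (if i = 0 ∧ j = 0 then 1 else 0) +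
      t * (coeff (i + 1) (coeff j Q) + coeff i (coeff (j + 1) Q) +
        coeff i (coeff j (C X * (X * Q)))) := by
  have hXY : C X * (X * Q) = C X * X + C (C t) * (C X * Q) + C (C t) * (X * Q)
      + C (C t) * (C X * (X * (C X * (X * Q))))
      - C (C t) * (C X * C a) - C (C t) * (X * PowerSeries.map C b) := by
    unfold krewerasKernel at hQ
    linear_combination hQ
  have h := congrArg (fun g => coeff (i + 1) (coeff (j + 1) g)) hXY
  have hX : coeff (i + 1) (coeff j (C X : R⟦X⟧⟦X⟧)) = if i = 0 ∧ j = 0 then 1 else 0 := by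
    obtain _ | j := j <;> simp [coeff_X]
  simp only [map_add, map_sub, coeff_C_mul, coeff_succ_X_mul, coeff_succ_mul_X, hX,
    coeff_C_of_ne_zero (Nat.succ_ne_zero _), coeff_map, mul_zero, sub_zero] at h ⊢
  linear_combination h

end Kernel

/-- The position reached after the first `k` of the `m` steps listed in `f`;
it stays constant for `k ≥ m`. -/
def partialSum {M : Type*} [AddCommMonoid M] {m : ℕ} (f : Fin m → M) (k : ℕ) : M :=
  ∑ i ∈ univ.filter (fun i : Fin m => (i : ℕ) < k), f i

lemma partialSum_of_le {M : Type*} [AddCommMonoid M] {m k : ℕ} (f : Fin m → M) (hmk : m ≤ k) :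
    partialSum f k = ∑ i, f i := by
  rw [partialSum, filter_true_of_mem fun i _ => i.isLt.trans_le hmk]

lemma partialSum_snoc {M : Type*} [AddCommMonoid M] {m : ℕ} (f : Fin m → M) (s : M) (k : ℕ) :
    partialSum (Fin.snoc f s : Fin (m + 1) → M) k =
      partialSum f k + if m < k then s else 0 := by
  simp [partialSum, sum_filter, Fin.sum_univ_castSucc]

/-- The step sequence `f` is a walk from the origin to `e` with steps in `S` that stays in the
quarter plane, expressed through the product order on `ℤ × ℤ`. -/
def IsQuadrantWalk (S : Set (ℤ × ℤ)) (e : ℤ × ℤ) {m : ℕ} (f : Fin m → ℤ × ℤ) : Prop :=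
  (∀ i, f i ∈ S) ∧ (∀ k : ℕ, 0 ≤ partialSum f k) ∧ ∑ i, f i = e

lemma qpWalks_eq_card (S : Set (ℤ × ℤ)) (m : ℕ) (e : ℤ × ℤ) :
    qpWalks S m e = Nat.card {f : Fin m → ℤ × ℤ // IsQuadrantWalk S e f} := rfl

lemma isQuadrantWalk_snoc {S : Set (ℤ × ℤ)} {e : ℤ × ℤ} (he : 0 ≤ e) {m : ℕ}
    {f : Fin m → ℤ × ℤ} {s : ℤ × ℤ} :
    IsQuadrantWalk S e (Fin.snoc f s : Fin (m + 1) → ℤ × ℤ) ↔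
      s ∈ S ∧ IsQuadrantWalk S (e - s) f := by
  have hsum : ∑ i, (Fin.snoc f s : Fin (m + 1) → ℤ × ℤ) i = ∑ i, f i + s := by
    simp [Fin.sum_univ_castSucc]
  simp only [IsQuadrantWalk, Fin.forall_fin_succ', Fin.snoc_castSucc, Fin.snoc_last,
    partialSum_snoc, hsum, eq_sub_iff_add_eq]
  constructor
  · rintro ⟨⟨hf, hs⟩, hpos, hend⟩
    refine ⟨hs, hf, fun k => ?_, hend⟩
    rcases lt_or_ge m k with hk | hk
    · rw [partialSum_of_le f hk.le, ← partialSum_of_le f le_rfl]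
      simpa using hpos m
    · simpa [hk.not_gt] using hpos k
  · rintro ⟨hs, hf, hpos, hend⟩
    refine ⟨⟨hf, hs⟩, fun k => ?_, hend⟩
    rcases lt_or_ge m k with hk | hk
    · rwa [partialSum_of_le f hk.le, if_pos hk, hend]
    · simpa [hk.not_gt] using hpos k

lemma finite_isQuadrantWalk {S : Set (ℤ × ℤ)} (hS : S.Finite) (e : ℤ × ℤ) (m : ℕ) :
    Finite {f : Fin m → ℤ × ℤ // IsQuadrantWalk S e f} :=
  ((Set.Finite.pi' fun _ => hS).subset fun _ hf => hf.1 :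
    {f : Fin m → ℤ × ℤ | IsQuadrantWalk S e f}.Finite).to_subtype

/-- Removal of the last step of a quarter-plane walk, the source of the recursion on the length. -/
noncomputable def quadrantWalkSuccEquiv (S : Set (ℤ × ℤ)) {e : ℤ × ℤ} (he : 0 ≤ e) (m : ℕ) :
    {f : Fin (m + 1) → ℤ × ℤ // IsQuadrantWalk S e f} ≃
      Σ s : S, {f : Fin m → ℤ × ℤ // IsQuadrantWalk S (e - s) f} where
  toFun f :=
    have hf := (isQuadrantWalk_snoc he).1 ((Fin.snoc_init_self f.1).symm ▸ f.2)
    ⟨⟨f.1 (Fin.last m), hf.1⟩, Fin.init f.1, hf.2⟩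
  invFun p := ⟨Fin.snoc p.2.1 p.1.1, (isQuadrantWalk_snoc he).2 ⟨p.1.2, p.2.2⟩⟩
  left_inv f := by simp
  right_inv p := Sigma.subtype_ext (by simp) (by simp)

lemma qpWalks_succ (S : Finset (ℤ × ℤ)) {e : ℤ × ℤ} (he : 0 ≤ e) (m : ℕ) :
    qpWalks S (m + 1) e = ∑ s ∈ S, qpWalks S m (e - s) := by
  have hfin (s : S) := finite_isQuadrantWalk S.finite_toSet (e - s) m
  rw [qpWalks_eq_card, Nat.card_congr (quadrantWalkSuccEquiv S he m), Nat.card_sigma]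
  exact S.sum_coe_sort fun s => qpWalks S m (e - s)

lemma qpWalks_zero (S : Set (ℤ × ℤ)) (e : ℤ × ℤ) : qpWalks S 0 e = if e = 0 then 1 else 0 := by
  split_ifs with he <;> simp [qpWalks, he, Ne.symm]

lemma qpWalks_eq_zero (S : Set (ℤ × ℤ)) (m : ℕ) {e : ℤ × ℤ} (he : ¬ 0 ≤ e) :
    qpWalks S m e = 0 := by
  rw [qpWalks_eq_card, Nat.card_eq_zero]
  left
  rw [isEmpty_subtype]
  rintro f ⟨-, hpos, hend⟩
  exact he (by simpa [partialSum_of_le f le_rfl, hend] using hpos m)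

/-- Kreweras' step set. -/
abbrev krewerasSteps : Finset (ℤ × ℤ) := {(-1, 0), (0, -1), (1, 1)}

lemma qpWalks_krewerasSteps_succ (m i j : ℕ) :
    qpWalks krewerasSteps (m + 1) (i, j) = qpWalks krewerasSteps m ((i + 1 : ℕ), j) +
      qpWalks krewerasSteps m (i, (j + 1 : ℕ)) + qpWalks krewerasSteps m (i - 1, j - 1) := by
  rw [qpWalks_succ _ (by simp [Prod.le_def])]
  simp [krewerasSteps, add_assoc]

lemma qpWalks_krewerasSteps_eq_coeff {R : Type*} [CommRing R] {a b : R⟦X⟧⟦X⟧} {Q : R⟦X⟧⟦X⟧⟦X⟧}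
    (hQ : krewerasKernel (C (C X)) (C X) X * Q =
      C X * X - C (C X) * (C X * C a) - C (C X) * (X * PowerSeries.map C b)) (m i j : ℕ) :
    (qpWalks krewerasSteps m (i, j) : R) = coeff m (coeff i (coeff j Q)) := by
  induction m generalizing i j with
  | zero =>
    rw [qpWalks_zero, coeff_of_krewerasKernel_mul_eq hQ]
    split_ifs <;> simp_all [Prod.ext_iff]
  | succ m ih =>
    have hdiag : (qpWalks krewerasSteps m (i - 1, j - 1) : R) =
        coeff m (coeff i (coeff j (C X * (X * Q)))) := by
      obtain _ | i := i
      · simp [qpWalks_eq_zero, Prod.le_def]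
      obtain _ | j := j
      · simp [qpWalks_eq_zero, Prod.le_def]
      simpa [coeff_C_mul, coeff_succ_X_mul] using ih i j
    have hdelta : coeff (m + 1) (if i = 0 ∧ j = 0 then 1 else 0 : R⟦X⟧) = 0 := by
      split_ifs <;> simp [coeff_one]
    rw [coeff_of_krewerasKernel_mul_eq hQ, qpWalks_krewerasSteps_succ, map_add, hdelta,
      zero_add, coeff_succ_X_mul, map_add, map_add, ← hdiag, ← ih, ← ih]
    push_cast
    rfl

theorem kreweras_closed_walks (n : ℕ) :
    (qpWalks {(-1,0), (0,-1), (1,1)} (3 * n) (0, 0) : ℚ) =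
      4 ^ n / ((n + 1) * (2 * n + 1)) * (3 * n).choose n := by
  have hz : (C 4 * X ^ 3 : ℚ⟦X⟧) ∈ Ideal.span {X} :=
    Ideal.mem_span_singleton.2 ((dvd_pow_self X three_ne_zero).mul_left _)
  obtain ⟨B, hB⟩ := exists_eq_one_add_mul_pow hz 3
  obtain ⟨q, hq₀, hq⟩ := exists_catalyticEq hB
  obtain ⟨Q, hQ₀, hQ⟩ := hq.exists_krewerasKernel_mul_eq
  have hcount := qpWalks_krewerasSteps_eq_coeff hQ (3 * n) 0 0
  rw [hQ₀, hq₀, coeff_kreweras_of_fussCatalan hB] at hcount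
  simpa using hcount
end

section
/- For all n ≥ 0, the number of closed quarter-plane walks of length 2n with Gessel's step set S = {(-1,0),(1,0),(-1,-1),(1,1)} equals 16^n (5/6)_n (1/2)_n / ((2)_n (5/3)_n), and there are no closed walks of odd length. -/
open Finset

/-! Cancelling the kernel `x y - t (1 + y) (1 + x² y)` in the functional equation of
`Q(x, y; t) = ∑ q(i, j; n) x ^ i y ^ j t ^ n` relates `Q(x, 0)` to `Q(0, y)` along the kernel curve.
There is a rational function of `x` and `1 + t x Q(x, 0)`, and another one of `y` and `Q(0, y)`,
which agree on this curve and, with the right coefficients `β`, `δ`, `ε`, have no poles. Such a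
pair of invariants must vanish: substituting for `x` a root of the kernel that is divisible by `t`
shows that the power of `t` dividing the invariants can be increased indefinitely. Hence `Q(x, 0)`
satisfies a cubic equation with coefficients in `ℚ⟦t⟧[x]`. Specializing `x` to the points `1`, `-1`
and the small root of `x = 2 t (1 + x²)`, where this cubic has a double root, and eliminating
`β`, `δ`, `ε` gives an algebraic equation for `Q(0, 0)`. It has genus zero, and its rational
parametrization yields a second-order differential equation, which for the coefficients of `Q(0, 0)`
is the two-term recurrence satisfied by the closed form. -/

namespace Gessel

open scoped Polynomial PowerSeries

section PowerSeriesTools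

open PowerSeries

variable {P R : Type*} [CommRing P] [CommRing R]

theorem eq_zero_of_forall_X_pow_dvd {f : R⟦X⟧} (h : ∀ n, X ^ n ∣ f) : f = 0 := by
  ext n
  exact X_pow_dvd_iff.1 (h (n + 1)) n n.lt_succ_self

theorem constantCoeff_ofNat (n : ℕ) [n.AtLeastTwo] :
    constantCoeff (ofNat(n) : R⟦X⟧) = OfNat.ofNat n :=
  map_ofNat _ n

theorem C_dvd_iff_forall_dvd_coeff (p : R) (f : R⟦X⟧) : C p ∣ f ↔ ∀ n, p ∣ coeff n f := by
  refine ⟨?_, fun h => ?_⟩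
  · rintro ⟨g, rfl⟩ n
    rw [coeff_C_mul]
    exact dvd_mul_right p _
  · choose g hg using h
    exact ⟨mk g, by ext n; rw [coeff_C_mul, coeff_mk, hg]⟩

theorem ringHom_ext_of_X {φ ψ : P⟦X⟧ →+* R⟦X⟧} (hC : φ.comp C = ψ.comp C) (hφ : φ X = X)
    (hψ : ψ X = X) : φ = ψ := by
  have key (n : ℕ) : ∀ f, X ^ n ∣ φ f - ψ f := by
    induction n with
    | zero => simp
    | succ n ih =>
      intro f
      obtain ⟨g, hg⟩ := ih (mk fun p => coeff (p + 1) f)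
      have hf := eq_X_mul_shift_add_const f
      have hc : φ (C (constantCoeff f)) = ψ (C (constantCoeff f)) := RingHom.congr_fun hC _
      refine ⟨g, ?_⟩
      rw [hf, map_add, map_add, map_mul, map_mul, hc, hφ, hψ]
      linear_combination X * hg
  exact RingHom.ext fun f => sub_eq_zero.1 (eq_zero_of_forall_X_pow_dvd fun n => key n f)

open scoped PowerSeries.WithPiTopology in
/-- The extension of a ring homomorphism `ψ : P → R⟦X⟧` to `P⟦X⟧` that fixes the variable `X`. It is
obtained by evaluating power series in `R⟦X⟧`, for the topology induced by discrete coefficients. -/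
noncomputable def extendFixingX (ψ : P →+* R⟦X⟧) : P⟦X⟧ →+* R⟦X⟧ :=
  letI : UniformSpace P := ⊥
  letI : UniformSpace R := ⊥
  haveI : DiscreteTopology P := ⟨rfl⟩
  haveI : DiscreteTopology R := ⟨rfl⟩
  eval₂Hom (φ := ψ) continuous_of_discreteTopology
    (WithPiTopology.isTopologicallyNilpotent_of_constantCoeff_zero constantCoeff_X)

open scoped PowerSeries.WithPiTopology in
@[simp]
theorem extendFixingX_X (ψ : P →+* R⟦X⟧) : extendFixingX ψ X = X := by
  let _ : UniformSpace P := ⊥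
  let _ : UniformSpace R := ⊥
  exact (congrFun (coe_eval₂Hom _ _) _).trans (eval₂_X _ _)

open scoped PowerSeries.WithPiTopology in
@[simp]
theorem extendFixingX_C (ψ : P →+* R⟦X⟧) (p : P) : extendFixingX ψ (C p) = ψ p := by
  let _ : UniformSpace P := ⊥
  let _ : UniformSpace R := ⊥
  exact (congrFun (coe_eval₂Hom _ _) _).trans (eval₂_C _ _ _)

theorem extendFixingX_map {P' : Type*} [CommRing P'] (ψ : P →+* R⟦X⟧) (h : P' →+* P) (f : P'⟦X⟧) :
    extendFixingX ψ (map h f) = extendFixingX (ψ.comp h) f :=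
  RingHom.congr_fun (f := (extendFixingX ψ).comp (map h))
    (ringHom_ext_of_X (by ext; simp) (by simp) (by simp)) f

theorem extendFixingX_C_comp (h : P →+* R) : extendFixingX (C.comp h) = map h :=
  ringHom_ext_of_X (by ext1; simp) (by simp) (by simp)

theorem exists_eq_X_mul_quadratic (u v w : R⟦X⟧) : ∃ a, a = X * (u + v * a + w * a ^ 2) := by
  -- In terms of `s = 1 - X * v - X * w * a` the equation is monic, and `a = X * u / s`.
  obtain ⟨b, hb⟩ : ∃ b, b = X * v - 1 := ⟨_, rfl⟩
  obtain ⟨c, hc⟩ : ∃ c, c = X ^ 2 * (u * w) := ⟨_, rfl⟩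
  let f : R⟦X⟧[X] := Polynomial.X ^ 2 + (Polynomial.C b * Polynomial.X + Polynomial.C c)
  have hf : f.Monic :=
    Polynomial.monic_X_pow_add (Polynomial.degree_linear_le.trans_lt (by norm_num))
  have hI (g : R⟦X⟧) : X * g ∈ Ideal.span {(X : R⟦X⟧)} :=
    Ideal.mul_mem_right _ _ (Ideal.mem_span_singleton_self X)
  have hroot : f.eval 1 ∈ Ideal.span {(X : R⟦X⟧)} := by
    convert hI (v + X * (u * w)) using 1
    simp only [f, Polynomial.eval_add, Polynomial.eval_mul, Polynomial.eval_pow,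
      Polynomial.eval_X, Polynomial.eval_C, hb, hc]
    ring
  have hderiv : Ideal.Quotient.mk (Ideal.span {X}) (f.derivative.eval 1) = 1 := by
    rw [← map_one (Ideal.Quotient.mk _), Ideal.Quotient.mk_eq_mk_iff_sub_mem]
    convert hI v using 1
    simp [f, hb]
  obtain ⟨s, hs, hs1⟩ := HenselianRing.is_henselian f hf 1 hroot (hderiv ▸ isUnit_one)
  rw [Polynomial.IsRoot] at hs
  have hunit : IsUnit s := by
    rw [isUnit_iff_constantCoeff]
    have := X_dvd_iff.1 (Ideal.mem_span_singleton.1 hs1)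
    rw [map_sub, map_one, sub_eq_zero] at this
    exact this ▸ isUnit_one
  obtain ⟨r, hr⟩ := hunit.exists_right_inv
  simp only [f, Polynomial.eval_add, Polynomial.eval_mul, Polynomial.eval_pow,
    Polynomial.eval_X, Polynomial.eval_C, hb, hc] at hs
  refine ⟨X * u * r, ?_⟩
  linear_combination (-(X * u * r ^ 2)) * hs +
    (X * u * (s * r + 1) + (X * v - 1) * (X * u * r)) * hr

/-- Evaluation of the polynomial coefficients of a series at a series `a`, the variable `X` being
fixed: `F(t, x)` is sent to `F(t, a(t))`. -/
noncomputable def evalAt (a : R⟦X⟧) : R[X]⟦X⟧ →+* R⟦X⟧ :=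
  extendFixingX (Polynomial.eval₂RingHom C a)

@[simp]
theorem evalAt_X (a : R⟦X⟧) : evalAt a X = X :=
  extendFixingX_X _

@[simp]
theorem evalAt_C_X (a : R⟦X⟧) : evalAt a (C Polynomial.X) = a := by
  simp [evalAt]

@[simp]
theorem evalAt_map_C (a f : R⟦X⟧) : evalAt a (map Polynomial.C f) = f := by
  have h : (Polynomial.eval₂RingHom C a).comp Polynomial.C = C.comp (RingHom.id R) := by
    ext; simp
  rw [evalAt, extendFixingX_map, h, extendFixingX_C_comp, map_id, id_eq]

theorem evalAt_C (y : R) : evalAt (C y) = map (Polynomial.evalRingHom y) := by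
  rw [← extendFixingX_C_comp, evalAt]
  congr 1
  ext <;> simp

@[simp]
theorem evalAt_C_C (a : R⟦X⟧) (r : R) : evalAt a (C (Polynomial.C r)) = C r := by
  rw [← map_C, evalAt_map_C]

theorem evalAt_map_mapRingHom (h : P →+* R) (b : P⟦X⟧) (f : P[X]⟦X⟧) :
    evalAt (map h b) (map (Polynomial.mapRingHom h) f) = map h (evalAt b f) :=
  RingHom.congr_fun (f := (evalAt (map h b)).comp (map (Polynomial.mapRingHom h)))
    (g := (map h).comp (evalAt b)) (ringHom_ext_of_X (by ext <;> simp) (by simp) (by simp)) f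

end PowerSeriesTools

section InvariantLemma

open PowerSeries

variable {K : Type*} [Field K] [Infinite K]

theorem X_pow_dvd_of_eventually_evalAt {F : K[X]⟦X⟧} {n : ℕ}
    (h : ∀ᶠ y in Filter.cofinite, X ^ n ∣ evalAt (C y) F) : X ^ n ∣ F := by
  refine X_pow_dvd_iff.2 fun m hm => Polynomial.eq_zero_of_infinite_isRoot _ ?_
  refine (Filter.frequently_cofinite_iff_infinite.1 h.frequently).mono fun y hy => ?_
  have := X_pow_dvd_iff.1 hy m hm
  rwa [evalAt_C, coeff_map] at this

-- Each substitution of the first kind gains a factor `X`, and each of the second kind loses none.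
theorem eq_zero_of_invariant {F G : K[X]⟦X⟧}
    (hG : ∀ᶠ y in Filter.cofinite, ∃ a c, X ∣ c ∧ evalAt (C y) G = c * evalAt a F)
    (hF : ∀ᶠ x in Filter.cofinite, ∃ b c, evalAt (C x) F = c * evalAt b G) : F = 0 := by
  have hpow (n : ℕ) : X ^ n ∣ F := by
    induction n with
    | zero => exact pow_zero (X : K[X]⟦X⟧) ▸ one_dvd F
    | succ n ih =>
      obtain ⟨F', rfl⟩ := ih
      obtain ⟨G', rfl⟩ : X ^ (n + 1) ∣ G := X_pow_dvd_of_eventually_evalAt <| hG.mono <| by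
        rintro y ⟨a, c, hc, h⟩
        rw [h, map_mul, map_pow, evalAt_X, pow_succ', ← mul_assoc]
        exact (mul_dvd_mul_right hc _).trans (dvd_mul_right _ _)
      refine X_pow_dvd_of_eventually_evalAt <| hF.mono ?_
      rintro x ⟨b, c, h⟩
      rw [h, map_mul, map_pow, evalAt_X]
      exact (dvd_mul_right _ _).mul_left c
  exact eq_zero_of_forall_X_pow_dvd hpow

end InvariantLemma

section Walks

variable {m : ℕ}

/-- The position reached by the sequence of steps `f` after its first `k` steps, or after all of its
steps if `k` exceeds the length. -/
def position (f : Fin m → ℤ × ℤ) (k : ℕ) : ℤ × ℤ :=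
  ∑ i ∈ univ.filter fun i : Fin m => (i : ℕ) < k, f i

/-- The step sequences counted by `qpWalks S m e`. -/
def IsQuarterPlaneWalk (S : Set (ℤ × ℤ)) (e : ℤ × ℤ) (f : Fin m → ℤ × ℤ) : Prop :=
  (∀ i, f i ∈ S) ∧ (∀ k, 0 ≤ position f k) ∧ ∑ i, f i = e

theorem qpWalks_eq_card (S : Set (ℤ × ℤ)) (m : ℕ) (e : ℤ × ℤ) :
    qpWalks S m e = Nat.card {f : Fin m → ℤ × ℤ // IsQuarterPlaneWalk S e f} :=
  rfl

theorem position_of_length_le (f : Fin m → ℤ × ℤ) {k : ℕ} (hk : m ≤ k) :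
    position f k = ∑ i, f i := by
  rw [position, filter_true_of_mem fun i _ => i.2.trans_le hk]

theorem position_snoc_of_le (f : Fin m → ℤ × ℤ) (s : ℤ × ℤ) {k : ℕ} (hk : k ≤ m) :
    position (Fin.snoc f s : Fin (m + 1) → ℤ × ℤ) k = position f k := by
  simp only [position, sum_filter, Fin.sum_univ_castSucc, Fin.snoc_castSucc, Fin.val_castSucc,
    Fin.val_last, hk.not_gt, if_false, add_zero]

theorem isQuarterPlaneWalk_snoc_iff {S : Set (ℤ × ℤ)} {e : ℤ × ℤ} (he : 0 ≤ e)
    (f : Fin m → ℤ × ℤ) (s : ℤ × ℤ) :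
    IsQuarterPlaneWalk S e (Fin.snoc f s : Fin (m + 1) → ℤ × ℤ) ↔
      s ∈ S ∧ IsQuarterPlaneWalk S (e - s) f := by
  have hsum : ∑ i, (Fin.snoc f s : Fin (m + 1) → ℤ × ℤ) i = ∑ i, f i + s := by
    simp [Fin.sum_univ_castSucc]
  constructor
  · rintro ⟨hS, hpos, htot⟩
    refine ⟨by simpa using hS (Fin.last m), fun i => by simpa using hS i.castSucc, fun k => ?_,
      eq_sub_of_add_eq (hsum ▸ htot)⟩
    rcases le_total k m with hk | hk
    · exact position_snoc_of_le f s hk ▸ hpos k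
    · rw [position_of_length_le f hk, ← position_of_length_le f le_rfl,
        ← position_snoc_of_le f s le_rfl]
      exact hpos m
  · rintro ⟨hs, hS, hpos, htot⟩
    refine ⟨Fin.lastCases (by simpa using hs) fun i => by simpa using hS i, fun k => ?_, ?_⟩
    · rcases le_or_gt k m with hk | hk
      · exact (position_snoc_of_le f s hk).symm ▸ hpos k
      · rwa [position_of_length_le _ hk, hsum, htot, sub_add_cancel]
    · rw [hsum, htot, sub_add_cancel]

theorem qpWalks_zero (S : Set (ℤ × ℤ)) (e : ℤ × ℤ) :
    qpWalks S 0 e = if e = 0 then 1 else 0 := by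
  have h (f : Fin 0 → ℤ × ℤ) : IsQuarterPlaneWalk S e f ↔ e = 0 := by
    simp [IsQuarterPlaneWalk, position, eq_comm]
  simp only [qpWalks_eq_card, h]
  split_ifs with he <;> simp [he]

theorem qpWalks_succ (S : Finset (ℤ × ℤ)) (m : ℕ) {e : ℤ × ℤ} (he : 0 ≤ e) :
    qpWalks S (m + 1) e = ∑ s ∈ S, qpWalks S m (e - s) := by
  have finite_walks (e : ℤ × ℤ) : Finite {f : Fin m → ℤ × ℤ // IsQuarterPlaneWalk S e f} :=
    ((Set.Finite.pi' fun _ => S.finite_toSet).subset fun _ hf => hf.1).to_subtype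
  let lastStep : {f : Fin (m + 1) → ℤ × ℤ // IsQuarterPlaneWalk S e f} ≃
      {p : (ℤ × ℤ) × (Fin m → ℤ × ℤ) // p.1 ∈ S ∧ IsQuarterPlaneWalk S (e - p.1) p.2} :=
    ((Fin.snocEquiv fun _ => ℤ × ℤ).subtypeEquiv fun p =>
      (isQuarterPlaneWalk_snoc_iff he p.2 p.1).symm).symm
  let split : {p : (ℤ × ℤ) × (Fin m → ℤ × ℤ) // p.1 ∈ S ∧ IsQuarterPlaneWalk S (e - p.1) p.2} ≃
      Σ s : S, {f : Fin m → ℤ × ℤ // IsQuarterPlaneWalk S (e - s) f} :=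
    { toFun := fun p => ⟨⟨p.1.1, p.2.1⟩, ⟨p.1.2, p.2.2⟩⟩
      invFun := fun q => ⟨(q.1.1, q.2.1), q.1.2, q.2.2⟩ }
  rw [qpWalks_eq_card, Nat.card_congr (lastStep.trans split), Nat.card_sigma]
  exact Finset.sum_coe_sort S fun s => qpWalks S m (e - s)

theorem qpWalks_of_not_nonneg {S : Set (ℤ × ℤ)} {e : ℤ × ℤ} (he : ¬0 ≤ e) : qpWalks S m e = 0 := by
  have : IsEmpty {f : Fin m → ℤ × ℤ // IsQuarterPlaneWalk S e f} := by
    refine ⟨fun ⟨f, _, hpos, htot⟩ => he ?_⟩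
    rw [← htot, ← position_of_length_le f le_rfl]
    exact hpos m
  rw [qpWalks_eq_card, Nat.card_of_isEmpty]

theorem qpWalks_eq_zero_of_map_ne {A : Type*} [AddCommMonoid A] (φ : ℤ × ℤ →+ A) {a : A}
    {S : Set (ℤ × ℤ)} (hS : ∀ s ∈ S, φ s = a) {e : ℤ × ℤ} (he : φ e ≠ m • a) :
    qpWalks S m e = 0 := by
  have : IsEmpty {f : Fin m → ℤ × ℤ // IsQuarterPlaneWalk S e f} := by
    refine ⟨fun ⟨f, hf, _, htot⟩ => he ?_⟩
    simp [← htot, hS _ (hf _)]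
  rw [qpWalks_eq_card, Nat.card_of_isEmpty]

end Walks

section GesselWalks

/-- Gessel's step set. -/
abbrev gesselSteps : Finset (ℤ × ℤ) := {(-1, 0), (1, 0), (-1, -1), (1, 1)}

/-- The number of quarter-plane walks of length `n` with Gessel's steps that end at `(i, j)`. -/
noncomputable def walkCount (n : ℕ) (i j : ℤ) : ℚ :=
  qpWalks gesselSteps n (i, j)

theorem walkCount_zero (i j : ℤ) : walkCount 0 i j = if i = 0 ∧ j = 0 then 1 else 0 := by
  simp [walkCount, qpWalks_zero, Prod.ext_iff]

theorem walkCount_of_neg_left (n : ℕ) {i : ℤ} (hi : i < 0) (j : ℤ) : walkCount n i j = 0 := by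
  rw [walkCount, qpWalks_of_not_nonneg fun h => hi.not_ge h.1, Nat.cast_zero]

theorem walkCount_of_neg_right (n : ℕ) (i : ℤ) {j : ℤ} (hj : j < 0) : walkCount n i j = 0 := by
  rw [walkCount, qpWalks_of_not_nonneg fun h => hj.not_ge h.2, Nat.cast_zero]

theorem walkCount_succ (n : ℕ) {i j : ℤ} (hi : 0 ≤ i) (hj : 0 ≤ j) :
    walkCount (n + 1) i j = walkCount n (i + 1) j + walkCount n (i - 1) j +
      walkCount n (i + 1) (j + 1) + walkCount n (i - 1) (j - 1) := by
  rw [walkCount, qpWalks_succ _ _ (show (0 : ℤ × ℤ) ≤ (i, j) from ⟨hi, hj⟩)]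
  simp only [walkCount, sum_insert, sum_singleton, mem_insert, mem_singleton, Prod.mk.injEq,
    Prod.mk_sub_mk, sub_neg_eq_add, sub_zero, Nat.cast_add, zero_eq_neg, one_ne_zero, zero_ne_one,
    reduceCtorEq, and_true, and_false, and_self, or_self, not_false_eq_true]
  ring

theorem walkCount_of_length_lt (n : ℕ) (i j : ℤ) (h : n < i ∨ n < j) : walkCount n i j = 0 := by
  induction n generalizing i j with
  | zero =>
    rw [walkCount_zero, if_neg]
    omega
  | succ n ih =>
    rcases lt_or_ge i 0 with hi | hi
    · exact walkCount_of_neg_left _ hi j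
    rcases lt_or_ge j 0 with hj | hj
    · exact walkCount_of_neg_right _ i hj
    rw [walkCount_succ n hi hj, ih (i + 1) j, ih (i - 1) j, ih (i + 1) (j + 1),
      ih (i - 1) (j - 1)]
    · simp
    all_goals omega

theorem qpWalks_gesselSteps_odd {m : ℕ} (hm : Odd m) : qpWalks gesselSteps m (0, 0) = 0 := by
  refine qpWalks_eq_zero_of_map_ne (a := (1 : ZMod 2))
    ((Int.castAddHom (ZMod 2)).comp (AddMonoidHom.fst ℤ ℤ)) ?_ ?_
  · decide
  · simp [ZMod.natCast_eq_one_iff_odd.2 hm]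

end GesselWalks

section EndPolynomial

open Polynomial

/-- The polynomial `∑ i j, walkCount n i j * x ^ i * y ^ j`. Here `x` is the variable of the
coefficients and `y` is the outer variable. -/
noncomputable def endPolynomial (n : ℕ) : ℚ[X][X] :=
  ∑ j ∈ range (n + 1), (∑ i ∈ range (n + 1), C (walkCount n i j) * X ^ i) • X ^ j

theorem coeff_coeff_endPolynomial (n i j : ℕ) :
    ((endPolynomial n).coeff j).coeff i = walkCount n i j := by
  simp only [endPolynomial, finsetSum_coeff, coeff_smul, coeff_X_pow, smul_eq_mul, mul_ite, mul_one,
    mul_zero, Finset.sum_ite_eq, Finset.mem_range]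
  split_ifs with hj
  · simp only [finsetSum_coeff, coeff_C_mul, coeff_X_pow, mul_ite, mul_one, mul_zero,
      Finset.sum_ite_eq, Finset.mem_range]
    split_ifs with hi
    · rfl
    · exact (walkCount_of_length_lt _ _ _ (by omega)).symm
  · rw [walkCount_of_length_lt _ _ _ (by omega), coeff_zero]

theorem endPolynomial_zero : endPolynomial 0 = 1 := by
  simp [endPolynomial, walkCount_zero]

theorem endPolynomial_succ (n : ℕ) :
    C X * X * endPolynomial (n + 1) =
      (1 + X) * (1 + C X ^ 2 * X) * endPolynomial n - C ((endPolynomial n).coeff 0) -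
        (1 + X) * ((endPolynomial n).map constantCoeff).map C + C (C (walkCount n 0 0)) := by
  have expand (p q : ℚ[X][X]) (r s : ℚ[X][X]) :
      (1 + X) * (1 + C X ^ 2 * X) * p - r - (1 + X) * q + s =
        p + X * p + C X * (C X * (X * p)) + C X * (C X * (X * (X * p))) - r - q - X * q + s := by
    ring
  rw [expand, mul_assoc]
  ext j i
  have nonneg (k : ℕ) : (0 : ℤ) ≤ k + 1 := by positivity
  rcases j with _ | _ | j <;> rcases i with _ | _ | i <;>
    simp [coeff_coeff_endPolynomial, coeff_C_succ, coeff_X_mul, coeff_C_zero, walkCount_succ n,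
      walkCount_of_neg_left n, walkCount_of_neg_right n, nonneg, add_assoc] <;>
    ring

end EndPolynomial

section GeneratingFunctions

open PowerSeries

/-- The generating function `Q(x, y)` of Gessel walks. -/
noncomputable def Q : ℚ[X][X]⟦X⟧ := mk endPolynomial

/-- The generating function `Q(x, 0)` of Gessel walks ending on the `x`-axis. -/
noncomputable def Qx0 : ℚ[X]⟦X⟧ := mk fun n => (endPolynomial n).coeff 0

/-- The generating function `Q(0, y)` of Gessel walks ending on the `y`-axis. -/
noncomputable def Q0y : ℚ[X]⟦X⟧ := mk fun n => (endPolynomial n).map Polynomial.constantCoeff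

/-- The generating function of Gessel walks ending at `(i, 0)`. -/
noncomputable def axisSeries (i : ℤ) : ℚ⟦X⟧ := mk fun n => walkCount n i 0

theorem functional_equation :
    C (Polynomial.C Polynomial.X) * C Polynomial.X * Q =
      C (Polynomial.C Polynomial.X) * C Polynomial.X +
        X * ((1 + C Polynomial.X) * (1 + C (Polynomial.C Polynomial.X) ^ 2 * C Polynomial.X) * Q -
          map Polynomial.C Qx0 -
          (1 + C Polynomial.X) * map (Polynomial.mapRingHom Polynomial.C) Q0y +
          map (Polynomial.C.comp Polynomial.C) (axisSeries 0)) := by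
  simp only [← map_mul, ← map_one C, ← map_add, ← map_pow]
  ext1 n
  rcases n with _ | n
  · simp [Q, endPolynomial_zero]
  · simp only [map_add (coeff _), map_sub, coeff_succ_X_mul, coeff_C_mul, coeff_succ_C, coeff_map,
      Q, Qx0, Q0y, axisSeries, coeff_mk, endPolynomial_succ]
    simp

theorem functional_equation_evalAt {a b : ℚ⟦X⟧} (hab : a * b = X * (1 + b) * (1 + a ^ 2 * b)) :
    a * b = X * (evalAt a Qx0 + (1 + b) * evalAt b Q0y - axisSeries 0) := by
  have h := congrArg (fun F => evalAt a (evalAt (map Polynomial.C b) F)) functional_equation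
  have hconst : map (Polynomial.C.comp Polynomial.C) (axisSeries 0) =
      map Polynomial.C (map (Polynomial.C (R := ℚ)) (axisSeries 0)) := by
    rw [map_comp, RingHom.comp_apply]
  simp only [map_mul, map_add, map_sub, map_one, map_pow, evalAt_X, evalAt_C_X, evalAt_C_C,
    evalAt_map_C, hconst, evalAt_map_mapRingHom] at h
  linear_combination -h + evalAt a (evalAt (map Polynomial.C b) Q) * hab

theorem X_pow_three_dvd_Qx0_sub :
    C Polynomial.X ^ 3 ∣ Qx0 - (map Polynomial.C (axisSeries 0) +
      C Polynomial.X * map Polynomial.C (axisSeries 1) +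
      C Polynomial.X ^ 2 * map Polynomial.C (axisSeries 2)) := by
  simp only [← map_pow, C_dvd_iff_forall_dvd_coeff, Polynomial.X_pow_dvd_iff]
  intro n i hi
  simp only [map_sub, map_add, coeff_C_mul, coeff_map, Qx0, axisSeries, coeff_mk]
  interval_cases i <;> simp [coeff_coeff_endPolynomial, Polynomial.coeff_C]

theorem X_dvd_Q0y_sub : C Polynomial.X ∣ Q0y - map Polynomial.C (axisSeries 0) := by
  simp [C_dvd_iff_forall_dvd_coeff, Polynomial.X_dvd_iff, Q0y, axisSeries,
    coeff_coeff_endPolynomial]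

-- At `y = -1` the recurrence for walks has only the contributions of the boundary left.
theorem one_add_X_dvd_Q0y_sub :
    1 + C Polynomial.X ∣ Q0y - (1 + X * map Polynomial.C (axisSeries 1)) := by
  have h : (1 + C Polynomial.X : ℚ[X]⟦X⟧) = C (Polynomial.X - Polynomial.C (-1)) := by
    simp [add_comm]
  rw [h, C_dvd_iff_forall_dvd_coeff]
  intro n
  rw [Polynomial.dvd_iff_isRoot, Polynomial.IsRoot]
  rcases n with _ | n
  · simp [Q0y, endPolynomial_zero]
  · have hrec : ((endPolynomial (n + 1)).eval (-1)).coeff 0 = walkCount n 1 0 := by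
      have := congrArg (fun p => (p.eval (-1)).coeff 1) (endPolynomial_succ n)
      simpa [coeff_coeff_endPolynomial] using this
    have heval : ((endPolynomial (n + 1)).map Polynomial.constantCoeff).eval (-1) =
        ((endPolynomial (n + 1)).eval (-1)).coeff 0 := by
      simpa [Polynomial.eval_map] using
        Polynomial.eval₂_at_apply (p := endPolynomial (n + 1)) Polynomial.constantCoeff (-1)
    simp [Q0y, axisSeries, heval, hrec, coeff_one, coeff_succ_X_mul]

end GeneratingFunctions

section Invariants

variable {A : Type*} [CommRing A]

/-- The numerator `x ^ 3 * (I - ε)` of the invariant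
`I = y * (x + x ^ 3 - t - t * x ^ 4) / x ^ 3 + t * (y / x) ^ 3 - β * (y / x) ^ 2 - δ * (y / x)`. -/
def xNumerator (t β δ ε x y : A) : A :=
  y * (x + x ^ 3 - t - t * x ^ 4) + t * y ^ 3 - β * x * y ^ 2 - δ * x ^ 2 * y - ε * x ^ 3

/-- The numerator `t ^ 2 * y * (1 + y) ^ 3 * (J - ε)` of the invariant `J` in the second coordinate
obtained from `I` (see `xNumerator`) by substituting `x * m / (t * (1 + y))` for `y` and eliminating
`x` with the kernel equation. -/
def yNumerator (t β δ ε y m : A) : A :=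
  m * (t ^ 2 * y ^ 2 * (1 + y) ^ 2 + t ^ 2 * (1 + y) ^ 2 + y ^ 2) +
    y * (m ^ 3 - β * m ^ 2 * (1 + y) - t * δ * m * (1 + y) ^ 2 - t ^ 2 * ε * (1 + y) ^ 3)

theorem map_xNumerator {B : Type*} [CommRing B] (φ : A →+* B) (t β δ ε x y : A) :
    φ (xNumerator t β δ ε x y) = xNumerator (φ t) (φ β) (φ δ) (φ ε) (φ x) (φ y) := by
  simp [xNumerator]

theorem map_yNumerator {B : Type*} [CommRing B] (φ : A →+* B) (t β δ ε y m : A) :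
    φ (yNumerator t β δ ε y m) = yNumerator (φ t) (φ β) (φ δ) (φ ε) (φ y) (φ m) := by
  simp [yNumerator]

theorem xNumerator_eq_yNumerator_on_kernel {t β δ ε x y z m : A}
    (hker : x * y = t * (1 + y) * (1 + x ^ 2 * y)) (hm : t * (1 + y) * z = x * m) :
    t ^ 2 * y * (1 + y) ^ 3 * xNumerator t β δ ε x z = x ^ 3 * yNumerator t β δ ε y m := by
  have hquartic : t * (1 + y) ^ 2 * (x + x ^ 3 - t - t * x ^ 4) * y =
      x ^ 2 * (t ^ 2 * y ^ 2 * (1 + y) ^ 2 + t ^ 2 * (1 + y) ^ 2 + y ^ 2) := by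
    linear_combination
      (t * (1 + y) ^ 2 * (1 + x ^ 2) - x * y - t * (1 + y) * (1 + x ^ 2 * y)) * hker
  have hsq : (t * (1 + y) * z) ^ 2 = (x * m) ^ 2 := by rw [hm]
  have hcube : (t * (1 + y) * z) ^ 3 = (x * m) ^ 3 := by rw [hm]
  unfold xNumerator yNumerator
  linear_combination (t * (1 + y) ^ 2 * (x + x ^ 3 - t - t * x ^ 4) * y) * hm +
    x * m * hquartic + y * hcube - β * x * y * (1 + y) * hsq - δ * t * x ^ 2 * (1 + y) ^ 2 * y * hm

theorem sub_dvd_xNumerator_sub (t β δ ε x y z : A) :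
    y - z ∣ xNumerator t β δ ε x y - xNumerator t β δ ε x z :=
  ⟨x + x ^ 3 - t - t * x ^ 4 + t * (y ^ 2 + y * z + z ^ 2) - β * x * (y + z) - δ * x ^ 2, by
    unfold xNumerator; ring⟩

theorem sub_dvd_yNumerator_sub (t β δ ε y m n : A) :
    m - n ∣ yNumerator t β δ ε y m - yNumerator t β δ ε y n :=
  ⟨t ^ 2 * y ^ 2 * (1 + y) ^ 2 + t ^ 2 * (1 + y) ^ 2 + y ^ 2 +
    y * (m ^ 2 + m * n + n ^ 2 - β * (m + n) * (1 + y) - t * δ * (1 + y) ^ 2), by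
    unfold yNumerator; ring⟩

-- The values of `β`, `δ` and `ε` cancel the poles of `I - ε` at `x = 0`.
theorem pow_four_dvd_xNumerator {t β δ ε x y u v w : A}
    (hy : x ^ 4 ∣ y - (1 + u * x + v * x ^ 2 + w * x ^ 3))
    (hβ : β = 1 + 2 * t * u) (hδ : δ = 2 * t * v - u - t * u ^ 2)
    (hε : ε = 1 + v - t * w + t * (3 * w + 6 * u * v + u ^ 3) - β * (2 * v + u ^ 2) - δ * u) :
    x ^ 4 ∣ xNumerator t β δ ε x y := by
  refine (dvd_iff_dvd_of_dvd_sub (hy.trans (sub_dvd_xNumerator_sub ..))).2 ?_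
  refine ⟨-t + u + w + (v - t * u) * x + (w - t * v) * x ^ 2 - t * w * x ^ 3 +
    t * (4 * u * w + 3 * u ^ 2 * v + 2 * v ^ 2 + (4 * v * w + 2 * u * v ^ 2 + u ^ 2 * w) * x +
      (2 * w ^ 2 + 2 * u * v * w) * x ^ 2 + (1 + u * x + v * x ^ 2 + w * x ^ 3) *
        (v ^ 2 + 2 * u * w + 2 * v * w * x + w ^ 2 * x ^ 2)) -
    β * (2 * w + 2 * u * v + (v ^ 2 + 2 * u * w + 2 * v * w * x + w ^ 2 * x ^ 2) * x) -
    δ * (v + w * x), ?_⟩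
  rw [xNumerator, hε, hδ, hβ]
  ring

theorem one_add_pow_three_dvd_yNumerator {t β δ ε y m u v : A}
    (hm : (1 + y) ^ 3 ∣ m - (-1 + (1 + t * u) * (1 + y) - t ^ 2 * (1 + v) * (1 + y) ^ 2))
    (hβ : β = 1 + 2 * t * u) (hδ : δ = 2 * t * v - u - t * u ^ 2) :
    (1 + y) ^ 3 ∣ yNumerator t β δ ε y m := by
  refine (dvd_iff_dvd_of_dvd_sub (hm.trans (sub_dvd_yNumerator_sub ..))).2 ?_
  obtain ⟨p, hp⟩ : ∃ p, p = 1 + t * u := ⟨_, rfl⟩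
  obtain ⟨q, hq⟩ : ∃ q, q = -t ^ 2 * (1 + v) := ⟨_, rfl⟩
  refine ⟨y * (q - t ^ 2 * p - t ^ 2 + t ^ 2 * (p - q) * (1 + y) + t ^ 2 * q * (1 + y) ^ 2 +
    p ^ 3 - 6 * p * q + (3 * p ^ 2 * q - 3 * q ^ 2) * (1 + y) + 3 * p * q ^ 2 * (1 + y) ^ 2 +
    q ^ 3 * (1 + y) ^ 3 - β * (p ^ 2 - 2 * q + 2 * p * q * (1 + y) + q ^ 2 * (1 + y) ^ 2) -
    t * δ * (p + q * (1 + y)) - t ^ 2 * ε) + t ^ 2 * (p - 1 + q * (1 + y)), ?_⟩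
  rw [yNumerator, hδ, hβ, hp, hq]
  ring

theorem mul_one_add_pow_three_dvd_yNumerator {t β δ ε y m : A} (hm : y ∣ m)
    (h : (1 + y) ^ 3 ∣ yNumerator t β δ ε y m) :
    y * (1 + y) ^ 3 ∣ yNumerator t β δ ε y m := by
  have hcop : IsCoprime y ((1 + y) ^ 3) := IsCoprime.pow_right ⟨-1, 1, by ring⟩
  refine hcop.mul_dvd (dvd_add (hm.mul_right _) (dvd_mul_right _ _)) h

end Invariants

section KernelCurve

open PowerSeries

/-- The pairs of series that cancel the kernel `x * y - X * (1 + y) * (1 + x ^ 2 * y)` of the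
functional equation. -/
def IsKernelPoint {R : Type*} [CommRing R] (a b : R⟦X⟧) : Prop :=
  a * b = X * (1 + b) * (1 + a ^ 2 * b)

theorem IsKernelPoint.left_ne_zero {R : Type*} [CommRing R] [IsDomain R] {a b : R⟦X⟧}
    (h : IsKernelPoint a b) (hb : 1 + b ≠ 0) : a ≠ 0 := by
  rintro rfl
  exact mul_ne_zero X_ne_zero hb (by simpa [IsKernelPoint] using h.symm)

theorem IsKernelPoint.right_ne_zero {R : Type*} [CommRing R] [Nontrivial R] {a b : R⟦X⟧}
    (h : IsKernelPoint a b) : b ≠ 0 := by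
  rintro rfl
  exact X_ne_zero (R := R) (by simpa [IsKernelPoint] using h.symm)

variable {K : Type*} [Field K]

theorem exists_isKernelPoint_C_right {y : K} (hy : y ≠ 0) :
    ∃ a : K⟦X⟧, X ∣ a ∧ IsKernelPoint a (C y) := by
  obtain ⟨a, ha⟩ := exists_eq_X_mul_quadratic (C (y⁻¹ * (1 + y))) 0 (C (1 + y))
  have hC : C y * C y⁻¹ = 1 := by rw [← map_mul, mul_inv_cancel₀ hy, map_one]
  refine ⟨a, ⟨_, ha⟩, ?_⟩
  simp only [map_mul, map_add, map_one] at ha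
  rw [IsKernelPoint]
  linear_combination C y * ha + X * (1 + C y) * hC

theorem exists_isKernelPoint_C_left {x : K} (hx : x ≠ 0) :
    ∃ b : K⟦X⟧, X ∣ b ∧ IsKernelPoint (C x) b := by
  obtain ⟨b, hb⟩ := exists_eq_X_mul_quadratic (C x⁻¹) (C (x⁻¹ * (1 + x ^ 2))) (C x)
  have hC : C x * C x⁻¹ = 1 := by rw [← map_mul, mul_inv_cancel₀ hx, map_one]
  refine ⟨b, ⟨_, hb⟩, ?_⟩
  simp only [map_mul, map_add, map_one, map_pow] at hb
  rw [IsKernelPoint]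
  linear_combination C x * hb + X * (1 + b + C x ^ 2 * b) * hC

end KernelCurve

section CubicEquation

open PowerSeries

/-- The series `1 + t * x * Q(x, 0)`. -/
noncomputable def xSeries : ℚ[X]⟦X⟧ := 1 + X * C Polynomial.X * Qx0

/-- The series in `y` that is proportional to `xSeries` on the kernel curve. -/
noncomputable def ySeries : ℚ[X]⟦X⟧ :=
  C Polynomial.X - X ^ 2 * (1 + C Polynomial.X) ^ 2 * Q0y +
    X ^ 2 * (1 + C Polynomial.X) * map Polynomial.C (axisSeries 0)

theorem evalAt_xSeries (a : ℚ⟦X⟧) : evalAt a xSeries = 1 + X * a * evalAt a Qx0 := by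
  simp [xSeries]

theorem IsKernelPoint.mul_evalAt_xSeries {a b : ℚ⟦X⟧} (h : IsKernelPoint a b) :
    X * (1 + b) * evalAt a xSeries = a * evalAt b ySeries := by
  simp only [evalAt_xSeries, ySeries, map_add, map_sub, map_mul, map_one, map_pow, evalAt_X,
    evalAt_C_X, evalAt_map_C]
  have := functional_equation_evalAt h
  rw [IsKernelPoint] at h
  linear_combination -h - X * (1 + b) * a * this

theorem exists_dvd_xNumerator_and_dvd_yNumerator :
    ∃ β δ ε : ℚ⟦X⟧, β = 1 + 2 * X ^ 2 * axisSeries 0 ∧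
      C Polynomial.X ^ 4 ∣ xNumerator X (map Polynomial.C β) (map Polynomial.C δ)
        (map Polynomial.C ε) (C Polynomial.X) xSeries ∧
      C Polynomial.X * (1 + C Polynomial.X) ^ 3 ∣ yNumerator X (map Polynomial.C β)
        (map Polynomial.C δ) (map Polynomial.C ε) (C Polynomial.X) ySeries := by
  obtain ⟨u, hu⟩ : ∃ u, u = X * axisSeries 0 := ⟨_, rfl⟩
  obtain ⟨v, hv⟩ : ∃ v, v = X * axisSeries 1 := ⟨_, rfl⟩
  obtain ⟨w, hw⟩ : ∃ w, w = X * axisSeries 2 := ⟨_, rfl⟩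
  obtain ⟨β, hβ⟩ : ∃ β, β = 1 + 2 * X * u := ⟨_, rfl⟩
  obtain ⟨δ, hδ⟩ : ∃ δ, δ = 2 * X * v - u - X * u ^ 2 := ⟨_, rfl⟩
  obtain ⟨ε, hε⟩ : ∃ ε, ε = 1 + v - X * w + X * (3 * w + 6 * u * v + u ^ 3) -
    β * (2 * v + u ^ 2) - δ * u := ⟨_, rfl⟩
  have hβ' := congrArg (map (Polynomial.C (R := ℚ))) hβ
  have hδ' := congrArg (map (Polynomial.C (R := ℚ))) hδ
  have hε' := congrArg (map (Polynomial.C (R := ℚ))) hε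
  simp only [map_add, map_sub, map_mul, map_pow, map_one, map_ofNat, map_X] at hβ' hδ' hε'
  refine ⟨β, δ, ε, by rw [hβ, hu]; ring, pow_four_dvd_xNumerator ?_ hβ' hδ' hε',
    mul_one_add_pow_three_dvd_yNumerator ?_ (one_add_pow_three_dvd_yNumerator ?_ hβ' hδ')⟩
  · convert (mul_dvd_mul_left (C Polynomial.X) X_pow_three_dvd_Qx0_sub).mul_left X using 1
    · ring
    · simp only [xSeries, hu, hv, hw, map_mul, map_X]
      ring
  · convert (dvd_mul_right (C Polynomial.X) (1 - X ^ 2 * (1 + C Polynomial.X) * Q0y)).add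
      (X_dvd_Q0y_sub.mul_left (-X ^ 2 * (1 + C Polynomial.X))) using 1
    rw [ySeries]
    ring
  · convert (mul_dvd_mul_left ((1 + C Polynomial.X) ^ 2) one_add_X_dvd_Q0y_sub).mul_left (-X ^ 2)
      using 1
    · ring
    · simp only [ySeries, hu, hv, map_mul, map_X]
      ring

theorem evalAt_xNumerator_eq {β δ ε a b : ℚ⟦X⟧} {f g : ℚ[X]⟦X⟧}
    (hf : xNumerator X (map Polynomial.C β) (map Polynomial.C δ) (map Polynomial.C ε)
      (C Polynomial.X) xSeries = C Polynomial.X ^ 4 * f)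
    (hg : yNumerator X (map Polynomial.C β) (map Polynomial.C δ) (map Polynomial.C ε)
      (C Polynomial.X) ySeries = C Polynomial.X * (1 + C Polynomial.X) ^ 3 * g)
    (hab : IsKernelPoint a b) (hb : 1 + b ≠ 0) :
    evalAt b g = a * evalAt a (X ^ 2 * f) := by
  have hf' := congrArg (evalAt a) hf
  have hg' := congrArg (evalAt b) hg
  simp only [map_xNumerator, map_yNumerator, map_mul, map_add, map_pow, map_one, evalAt_X,
    evalAt_C_X, evalAt_map_C] at hf' hg' ⊢
  have hne : a ^ 3 * b * (1 + b) ^ 3 ≠ 0 :=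
    mul_ne_zero (mul_ne_zero (pow_ne_zero _ (hab.left_ne_zero hb)) hab.right_ne_zero)
      (pow_ne_zero _ hb)
  have h := xNumerator_eq_yNumerator_on_kernel (β := β) (δ := δ) (ε := ε) hab
    hab.mul_evalAt_xSeries
  refine mul_left_cancel₀ hne ?_
  rw [hf', hg'] at h
  linear_combination -h

theorem exists_xNumerator_eq_zero :
    ∃ δ ε : ℚ⟦X⟧, xNumerator X (map Polynomial.C (1 + 2 * X ^ 2 * axisSeries 0))
      (map Polynomial.C δ) (map Polynomial.C ε) (C Polynomial.X) xSeries = 0 := by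
  obtain ⟨β, δ, ε, rfl, ⟨f, hf⟩, ⟨g, hg⟩⟩ := exists_dvd_xNumerator_and_dvd_yNumerator
  have hzero : X ^ 2 * f = 0 := by
    refine eq_zero_of_invariant (G := g) ?_ ?_
    · filter_upwards [(Set.toFinite {0, -1}).eventually_cofinite_notMem] with y hy
      simp only [Set.mem_insert_iff, Set.mem_singleton_iff, not_or] at hy
      obtain ⟨a, ha, hker⟩ := exists_isKernelPoint_C_right hy.1
      have hy1 : 1 + C y ≠ 0 := by
        rw [← map_one C, ← map_add, Ne, map_eq_zero_iff C C_injective, add_comm]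
        exact mt eq_neg_of_add_eq_zero_left hy.2
      exact ⟨a, a, ha, evalAt_xNumerator_eq hf hg hker hy1⟩
    · filter_upwards [(Set.finite_singleton 0).eventually_cofinite_notMem] with x hx
      obtain ⟨b, hb, hker⟩ := exists_isKernelPoint_C_left hx
      have hb1 : 1 + b ≠ 0 := by
        intro h
        simpa [X_dvd_iff.1 hb] using congrArg constantCoeff h
      refine ⟨b, C x⁻¹, ?_⟩
      rw [evalAt_xNumerator_eq hf hg hker hb1, ← mul_assoc, ← map_mul, inv_mul_cancel₀ hx, map_one,
        one_mul]
  have hf0 : f = 0 := (mul_eq_zero.1 hzero).resolve_left (pow_ne_zero _ X_ne_zero)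
  exact ⟨δ, ε, by rw [hf, hf0, mul_zero]⟩

end CubicEquation

section CoefficientwiseDerivation

open PowerSeries

variable {R A : Type*} [CommRing R] [CommRing A] [Algebra R A]

/-- The derivation of `A⟦X⟧` that applies a derivation of `A` to every coefficient; it is used to
differentiate in the second variable of a series with polynomial coefficients. -/
noncomputable def mapDerivation (d : Derivation R A A) : Derivation R A⟦X⟧ A⟦X⟧ :=
  Derivation.mk'
    { toFun := fun f => mk fun n => d (coeff n f)
      map_add' := fun f g => by ext; simp
      map_smul' := fun r f => by ext; simp }
    fun f g => by
      ext n
      simp [coeff_mul, Finset.sum_add_distrib, ← Nat.sum_antidiagonal_swap (n := n) (f := fun p =>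
        coeff p.1 g * d (coeff p.2 f))]

@[simp]
theorem coeff_mapDerivation (d : Derivation R A A) (f : A⟦X⟧) (n : ℕ) :
    coeff n (mapDerivation d f) = d (coeff n f) :=
  coeff_mk n fun n => d (coeff n f)

@[simp]
theorem mapDerivation_C (d : Derivation R A A) (a : A) : mapDerivation d (C a) = C (d a) := by
  ext n
  simp [coeff_C, apply_ite d]

theorem mapDerivation_map_algebraMap (d : Derivation R A A) (f : R⟦X⟧) :
    mapDerivation d (map (algebraMap R A) f) = 0 := by
  ext n
  simp

@[simp]
theorem mapDerivation_X (d : Derivation R A A) : mapDerivation d X = 0 := by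
  rw [← map_X (algebraMap R A), mapDerivation_map_algebraMap]

end CoefficientwiseDerivation

section CriticalPoints

-- On a curve `xNumerator = 0` with `x * d y ≠ y`, the last factor, which is the derivative of
-- `xNumerator` in `y`, vanishes at the zeros of `(x ^ 2 - 1) * (x - 2 * t * (x ^ 2 + 1))`.
theorem mul_derivation_xNumerator {R A : Type*} [CommRing R] [CommRing A] [Algebra R A]
    (d : Derivation R A A) {t β δ ε x : A} (y : A) (ht : d t = 0) (hβ : d β = 0) (hδ : d δ = 0)
    (hε : d ε = 0) (hx : d x = 1) :
    x * d (xNumerator t β δ ε x y) = 3 * xNumerator t β δ ε x y +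
      y * ((x ^ 2 - 1) * (x - 2 * t * (x ^ 2 + 1))) +
      (x * d y - y) *
        (x + x ^ 3 - t - t * x ^ 4 + 3 * t * y ^ 2 - 2 * β * x * y - δ * x ^ 2) := by
  simp only [xNumerator, map_add, map_sub, Derivation.leibniz, Derivation.leibniz_pow, ht, hβ, hδ,
    hε, hx, smul_eq_mul, nsmul_eq_mul]
  push_cast
  ring

open PowerSeries

theorem evalAt_mul_mapDerivation_sub_ne_zero (a : ℚ⟦X⟧) :
    evalAt a (C Polynomial.X * mapDerivation Polynomial.derivative' xSeries - xSeries) ≠ 0 := by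
  intro h
  simpa [xSeries, Derivation.leibniz] using congrArg constantCoeff h

variable {β δ ε a s e : ℚ⟦X⟧}

theorem partial_xNumerator_eq_zero_of_critical
    (h : xNumerator X (map Polynomial.C β) (map Polynomial.C δ) (map Polynomial.C ε)
      (C Polynomial.X) xSeries = 0)
    (hcrit : (a ^ 2 - 1) * (a - 2 * X * (a ^ 2 + 1)) = 0) :
    a + a ^ 3 - X - X * a ^ 4 + 3 * X * evalAt a xSeries ^ 2 - 2 * β * a * evalAt a xSeries -
      δ * a ^ 2 = 0 := by
  have hd := congrArg (evalAt a) <| mul_derivation_xNumerator (mapDerivation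
    (Polynomial.derivative' (R := ℚ))) xSeries (mapDerivation_X _)
    (mapDerivation_map_algebraMap _ β) (mapDerivation_map_algebraMap _ δ)
    (mapDerivation_map_algebraMap _ ε) (x := C Polynomial.X) (by simp)
  have hC : algebraMap ℚ ℚ[X] = Polynomial.C := rfl
  rw [hC, h] at hd
  simp only [map_add, map_sub, map_mul, map_pow, map_zero, map_one, map_ofNat, evalAt_X,
    evalAt_C_X, evalAt_map_C] at hd
  refine (mul_eq_zero.1 ?_).resolve_left (evalAt_mul_mapDerivation_sub_ne_zero a)
  simp only [map_sub, map_mul, evalAt_C_X]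
  linear_combination -hd - evalAt a xSeries * hcrit

theorem critical_equations
    (h : xNumerator X (map Polynomial.C β) (map Polynomial.C δ) (map Polynomial.C ε)
      (C Polynomial.X) xSeries = 0)
    (hcrit : (a ^ 2 - 1) * (a - 2 * X * (a ^ 2 + 1)) = 0) (ha : a ≠ 0)
    (hs : a * s = 2 * X * evalAt a xSeries)
    (he : a ^ 2 * e = 4 * X * (a + a ^ 3 - X - X * a ^ 4)) :
    s ^ 3 = β * s ^ 2 - 4 * X ^ 2 * ε ∧ 3 * s ^ 2 - 4 * β * s + e = 4 * X * δ := by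
  have hpartial := partial_xNumerator_eq_zero_of_critical h hcrit
  have hzero := congrArg (evalAt a) h
  simp only [map_xNumerator, evalAt_X, evalAt_map_C, evalAt_C_X, map_zero] at hzero
  rw [xNumerator] at hzero
  have hsq : (a * s) ^ 2 = (2 * X * evalAt a xSeries) ^ 2 := by rw [hs]
  have hcube : (a * s) ^ 3 = (2 * X * evalAt a xSeries) ^ 3 := by rw [hs]
  constructor
  · refine mul_left_cancel₀ (pow_ne_zero 3 ha) ?_
    linear_combination hcube - β * a * hsq - 4 * X ^ 2 * (hzero - evalAt a xSeries * hpartial)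
  · refine mul_left_cancel₀ (pow_ne_zero 2 ha) ?_
    linear_combination 3 * hsq - 4 * β * a * hs + he + 4 * X * hpartial

end CriticalPoints

section Elimination

theorem vieta_of_three_roots {R : Type*} [CommRing R] [IsDomain R] {β c s₁ s₂ s₃ : R}
    (h₁ : s₁ ^ 3 = β * s₁ ^ 2 - c) (h₂ : s₂ ^ 3 = β * s₂ ^ 2 - c) (h₃ : s₃ ^ 3 = β * s₃ ^ 2 - c)
    (h₁₂ : s₁ ≠ s₂) (h₁₃ : s₁ ≠ s₃) (h₂₃ : s₂ ≠ s₃) :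
    s₁ + s₂ + s₃ = β ∧ s₁ * s₂ + (s₁ + s₂) * s₃ = 0 := by
  have e₁₂ : s₁ ^ 2 + s₁ * s₂ + s₂ ^ 2 = β * (s₁ + s₂) := by
    refine mul_left_cancel₀ (sub_ne_zero.2 h₁₂) ?_
    linear_combination h₁ - h₂
  have e₁₃ : s₁ ^ 2 + s₁ * s₃ + s₃ ^ 2 = β * (s₁ + s₃) := by
    refine mul_left_cancel₀ (sub_ne_zero.2 h₁₃) ?_
    linear_combination h₁ - h₃
  have hβ : s₁ + s₂ + s₃ = β := by
    refine mul_left_cancel₀ (sub_ne_zero.2 h₂₃) ?_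
    linear_combination e₁₂ - e₁₃
  exact ⟨hβ, by rw [← hβ] at e₁₂; linear_combination -e₁₂⟩

theorem algebraic_of_critical_equations {R : Type*} [CommRing R] [IsDomain R] [CharZero R]
    {t β δ A s₁ s₂ s₃ : R} (ht : t ≠ 0) (hβ : s₁ + s₂ + s₃ = β)
    (hsym : s₁ * s₂ + (s₁ + s₂) * s₃ = 0) (hA : s₁ + s₂ = 4 * t ^ 2 * A)
    (h₁ : 3 * s₁ ^ 2 - 4 * β * s₁ + (8 * t - 8 * t ^ 2) = 4 * t * δ)
    (h₂ : 3 * s₂ ^ 2 - 4 * β * s₂ + (-8 * t - 8 * t ^ 2) = 4 * t * δ)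
    (h₃ : 3 * s₃ ^ 2 - 4 * β * s₃ + (1 + 8 * t ^ 2) = 4 * t * δ) :
    A * (s₃ + t ^ 2 * A) ^ 3 = 1 ∧
      (s₃ + t ^ 2 * A) ^ 2 + 18 * t ^ 2 * A * (s₃ + t ^ 2 * A) - 27 * t ^ 4 * A ^ 2 =
        1 + 16 * t ^ 2 := by
  subst hβ
  have hprod : s₁ * s₂ = -(4 * t ^ 2 * A * s₃) := by linear_combination hsym - s₃ * hA
  constructor
  · have hdiff : (s₁ - s₂) * (s₃ + t ^ 2 * A) = 4 * t := by
      have h4 : (4 : R) ≠ 0 := by norm_num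
      refine mul_left_cancel₀ h4 ?_
      linear_combination h₂ - h₁ - (s₁ - s₂) * hA
    have hdisc : (s₁ - s₂) ^ 2 = 16 * t ^ 2 * A * (s₃ + t ^ 2 * A) := by
      linear_combination (s₁ + s₂ + 4 * t ^ 2 * A) * hA - 4 * hprod
    have h16 : 16 * t ^ 2 ≠ 0 := mul_ne_zero (by norm_num) (pow_ne_zero 2 ht)
    refine mul_left_cancel₀ h16 ?_
    linear_combination -(s₃ + t ^ 2 * A) ^ 2 * hdisc +
      ((s₁ - s₂) * (s₃ + t ^ 2 * A) + 4 * t) * hdiff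
  · refine mul_left_cancel₀ two_ne_zero ?_
    linear_combination h₁ + h₂ - 2 * h₃ + (s₁ + s₂ + 4 * t ^ 2 * A - 4 * s₃) * hA + 6 * hprod

end Elimination

section AlgebraicEquation

open PowerSeries

theorem two_X_mul_evalAt_one_ne :
    2 * X * evalAt 1 xSeries ≠ -(2 * X * evalAt (-1) xSeries) := by
  have := algebraRat.charZero ℚ⟦X⟧
  have hconst : constantCoeff (evalAt 1 xSeries + evalAt (-1) xSeries) ≠ 0 := by
    simp only [evalAt_xSeries, map_add, map_mul, map_one, constantCoeff_X]
    norm_num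
  rw [← sub_ne_zero, sub_neg_eq_add, ← mul_add]
  exact mul_ne_zero (mul_ne_zero two_ne_zero X_ne_zero) (ne_zero_of_map hconst)

theorem exists_critical_values :
    ∃ s₁ s₂ s₃ δ : ℚ⟦X⟧, s₁ + s₂ = 2 * X ^ 2 * (evalAt 1 Qx0 + evalAt (-1) Qx0) ∧
      constantCoeff s₃ = 1 ∧ s₁ + s₂ + s₃ = 1 + 2 * X ^ 2 * axisSeries 0 ∧
      s₁ * s₂ + (s₁ + s₂) * s₃ = 0 ∧
      3 * s₁ ^ 2 - 4 * (1 + 2 * X ^ 2 * axisSeries 0) * s₁ + (8 * X - 8 * X ^ 2) = 4 * X * δ ∧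
      3 * s₂ ^ 2 - 4 * (1 + 2 * X ^ 2 * axisSeries 0) * s₂ + (-8 * X - 8 * X ^ 2) = 4 * X * δ ∧
      3 * s₃ ^ 2 - 4 * (1 + 2 * X ^ 2 * axisSeries 0) * s₃ + (1 + 8 * X ^ 2) = 4 * X * δ := by
  have := algebraRat.charZero ℚ⟦X⟧
  obtain ⟨δ, ε, h⟩ := exists_xNumerator_eq_zero
  obtain ⟨x, hx⟩ : ∃ x : ℚ⟦X⟧, x = X * (2 + 0 * x + 2 * x ^ 2) := exists_eq_X_mul_quadratic 2 0 2
  have hx0 : x ≠ 0 := by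
    rintro rfl
    simp [X_ne_zero] at hx
  have hxX : x * (1 - 2 * X * x) = 2 * X := by linear_combination hx
  obtain ⟨s₁, hs₁⟩ : ∃ s, s = 2 * X * evalAt 1 xSeries := ⟨_, rfl⟩
  obtain ⟨s₂, hs₂⟩ : ∃ s, s = -(2 * X * evalAt (-1) xSeries) := ⟨_, rfl⟩
  obtain ⟨s₃, hs₃⟩ : ∃ s, s = (1 - 2 * X * x) * evalAt x xSeries := ⟨_, rfl⟩
  obtain ⟨h₁, h₁'⟩ := critical_equations (s := s₁) (e := 8 * X - 8 * X ^ 2) (a := 1) h (by ring)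
    one_ne_zero (by rw [hs₁]; ring) (by ring)
  obtain ⟨h₂, h₂'⟩ := critical_equations (s := s₂) (e := -8 * X - 8 * X ^ 2) (a := -1) h (by ring)
    (by simp) (by rw [hs₂]; ring) (by ring)
  obtain ⟨h₃, h₃'⟩ := critical_equations (s := s₃) (e := 1 + 8 * X ^ 2) (a := x) h
    (by linear_combination (x ^ 2 - 1) * hx) hx0
    (by rw [hs₃]; linear_combination evalAt x xSeries * hxX)
    (by linear_combination (x - 2 * X * (1 + x ^ 2)) * hx)
  have hc₁ : constantCoeff s₁ = 0 := by simp [hs₁]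
  have hc₂ : constantCoeff s₂ = 0 := by simp [hs₂]
  have hc₃ : constantCoeff s₃ = 1 := by simp [hs₃, evalAt_xSeries]
  have h₁₃ : s₁ ≠ s₃ := fun H => zero_ne_one (hc₁.symm.trans (H ▸ hc₃))
  have h₂₃ : s₂ ≠ s₃ := fun H => zero_ne_one (hc₂.symm.trans (H ▸ hc₃))
  have h₁₂ : s₁ ≠ s₂ := hs₁ ▸ hs₂ ▸ two_X_mul_evalAt_one_ne
  obtain ⟨hβ, hsym⟩ := vieta_of_three_roots h₁ h₂ h₃ h₁₂ h₁₃ h₂₃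
  refine ⟨s₁, s₂, s₃, δ, ?_, hc₃, hβ, hsym, h₁', h₂', h₃'⟩
  rw [hs₁, hs₂, evalAt_xSeries, evalAt_xSeries]
  ring

theorem exists_algebraic_relation : ∃ A c : ℚ⟦X⟧, constantCoeff c = 1 ∧ A * c ^ 3 = 1 ∧
    c ^ 2 + 18 * X ^ 2 * A * c - 27 * X ^ 4 * A ^ 2 = 1 + 16 * X ^ 2 ∧
    2 * X ^ 2 * axisSeries 0 = 3 * X ^ 2 * A + c - 1 := by
  have := algebraRat.charZero ℚ⟦X⟧
  obtain ⟨s₁, s₂, s₃, δ, hadd, hs₃, hβ, hsym, h₁, h₂, h₃⟩ := exists_critical_values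
  obtain ⟨A, hA⟩ : ∃ A, 2 * A = evalAt 1 Qx0 + evalAt (-1) Qx0 := ⟨C 2⁻¹ * _, by
    rw [← mul_assoc, ← map_ofNat C, ← map_mul, mul_inv_cancel₀ two_ne_zero, map_one, one_mul]⟩
  have hsum : s₁ + s₂ = 4 * X ^ 2 * A := by linear_combination hadd - 2 * X ^ 2 * hA
  obtain ⟨hcube, hquad⟩ := algebraic_of_critical_equations X_ne_zero hβ hsym hsum h₁ h₂ h₃
  refine ⟨A, s₃ + X ^ 2 * A, ?_, hcube, hquad, ?_⟩
  · simp [hs₃]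
  · linear_combination -hβ + hsum

end AlgebraicEquation

section Parametrization

open PowerSeries

theorem exists_sqrt_of_algebraic_relation {R : Type*} [CommRing R] {A c : R⟦X⟧}
    (hc : constantCoeff c = 1) (hA : A * c ^ 3 = 1)
    (h : c ^ 2 + 18 * X ^ 2 * A * c - 27 * X ^ 4 * A ^ 2 = 1 + 16 * X ^ 2) :
    ∃ w, constantCoeff w = -1 ∧ w ^ 2 = 4 * c ^ 2 - 3 ∧
      27 * X ^ 2 = w ^ 3 * c ^ 3 - 8 * c ^ 6 + 9 * c ^ 4 := by
  have hA0 : constantCoeff A = 1 := by simpa [hc] using congrArg constantCoeff hA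
  have hu : constantCoeff (4 * c ^ 2 - 3) = 1 := by
    simp only [map_sub, map_mul, map_pow, constantCoeff_ofNat, hc]
    norm_num
  have hunit : IsUnit (4 * c ^ 2 - 3) := isUnit_iff_constantCoeff.2 (hu ▸ isUnit_one)
  obtain ⟨v, hv⟩ := hunit.exists_right_inv
  have hv0 : constantCoeff v = 1 := by simpa [hu] using congrArg constantCoeff hv
  have hsq : (27 * X ^ 2 + 8 * c ^ 6 - 9 * c ^ 4) ^ 2 = c ^ 6 * (4 * c ^ 2 - 3) ^ 3 := by
    linear_combination -27 * c ^ 6 * h +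
      27 * (18 * X ^ 2 * c ^ 4 - 27 * X ^ 4 * (A * c ^ 3 + 1)) * hA
  have hw : A * (27 * X ^ 2 + 8 * c ^ 6 - 9 * c ^ 4) * v * (4 * c ^ 2 - 3) =
      A * (27 * X ^ 2 + 8 * c ^ 6 - 9 * c ^ 4) := by
    linear_combination A * (27 * X ^ 2 + 8 * c ^ 6 - 9 * c ^ 4) * hv
  have hw0 : constantCoeff (A * (27 * X ^ 2 + 8 * c ^ 6 - 9 * c ^ 4) * v) = -1 := by
    simp only [map_sub, map_add, map_mul, map_pow, constantCoeff_ofNat, constantCoeff_X, hA0, hv0,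
      hc]
    norm_num
  generalize A * (27 * X ^ 2 + 8 * c ^ 6 - 9 * c ^ 4) * v = w at hw hw0
  have hw2 : w ^ 2 = 4 * c ^ 2 - 3 := by
    refine (hunit.pow 2).mul_left_cancel ?_
    linear_combination (w * (4 * c ^ 2 - 3) + A * (27 * X ^ 2 + 8 * c ^ 6 - 9 * c ^ 4)) * hw +
      A ^ 2 * hsq + (A * c ^ 3 + 1) * (4 * c ^ 2 - 3) ^ 3 * hA
  refine ⟨w, hw0, hw2, ?_⟩
  linear_combination -c ^ 3 * w * hw2 - c ^ 3 * hw - (27 * X ^ 2 + 8 * c ^ 6 - 9 * c ^ 4) * hA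

theorem exists_parametrization : ∃ k : ℚ⟦X⟧, constantCoeff k = 1 ∧
    256 * k ^ 6 * X ^ 2 = (k ^ 2 + 3) ^ 3 * (k ^ 2 - 1) ∧
    axisSeries 0 * ((k + 1) * (k ^ 2 + 3) ^ 3) = 32 * k ^ 3 * (k ^ 3 - 3 * k ^ 2 + 3 * k + 3) := by
  have := algebraRat.charZero ℚ⟦X⟧
  obtain ⟨A, c, hc, hA, h, hQ⟩ := exists_algebraic_relation
  obtain ⟨w, hw, hw2, hX⟩ := exists_sqrt_of_algebraic_relation hc hA h
  -- A rational parametrization of the conic `w ^ 2 = 4 * c ^ 2 - 3`.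
  obtain ⟨k, hk⟩ : ∃ k, k = 2 * c + w := ⟨_, rfl⟩
  have hk1 : constantCoeff k = 1 := by
    rw [hk, map_add, map_mul, constantCoeff_ofNat, hc, hw]
    norm_num
  have hk0 : k ≠ 0 := ne_zero_of_map (hk1 ▸ one_ne_zero)
  have hkc : 4 * (k * c) = k ^ 2 + 3 := by rw [hk]; linear_combination -hw2
  have hkw : 2 * (k * w) = k ^ 2 - 3 := by rw [hk]; linear_combination hw2
  have hkX : 256 * k ^ 6 * X ^ 2 = (k ^ 2 + 3) ^ 3 * (k ^ 2 - 1) := by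
    have h432 : (432 : ℚ⟦X⟧) ≠ 0 := by norm_num
    refine mul_left_cancel₀ h432 ?_
    calc 432 * (256 * k ^ 6 * X ^ 2)
        = 8 * ((2 * (k * w)) ^ 3 * (4 * (k * c)) ^ 3) - 8 * (4 * (k * c)) ^ 6 +
          144 * k ^ 2 * (4 * (k * c)) ^ 4 := by linear_combination 4096 * k ^ 6 * hX
      _ = 432 * ((k ^ 2 + 3) ^ 3 * (k ^ 2 - 1)) := by rw [hkc, hkw]; ring
  have hkA : A * (k ^ 2 + 3) ^ 3 = 64 * k ^ 3 := by
    rw [← hkc]; linear_combination 64 * k ^ 3 * hA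
  refine ⟨k, hk1, hkX, ?_⟩
  have h8 : 8 * X ^ 2 * k ≠ 0 :=
    mul_ne_zero (mul_ne_zero (by norm_num) (pow_ne_zero 2 X_ne_zero)) hk0
  refine mul_left_cancel₀ h8 ?_
  linear_combination 4 * k * (k + 1) * (k ^ 2 + 3) ^ 3 * hQ + 12 * X ^ 2 * k * (k + 1) * hkA +
    (k + 1) * (k ^ 2 + 3) ^ 3 * hkc - (k - 3) * hkX

end Parametrization

section DifferentialEquation

variable {R A : Type*} [CommRing R] [CommRing A] [Algebra R A] (d : Derivation R A A)

theorem derivation_ofNat (n : ℕ) [n.AtLeastTwo] : d ofNat(n) = 0 :=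
  d.map_natCast n

theorem derivation_denominator (k : A) : d ((k + 1) * (k ^ 2 + 3) ^ 3) =
    ((k ^ 2 + 3) ^ 3 + 6 * k * (k + 1) * (k ^ 2 + 3) ^ 2) * d k := by
  simp only [d.leibniz, d.leibniz_pow, map_add, derivation_ofNat, d.map_one_eq_zero,
    smul_eq_mul, nsmul_eq_mul]
  push_cast
  ring

variable [IsDomain A]

theorem derivation_quotient {f k m m' n n' e u r : A} (hm : m ≠ 0) (hf : f * m = n)
    (hdm : d m = m' * d k) (hdn : d n = n' * d k) (hdk : d k * e = u)
    (h : u * (n' * m - n * m') = r * m) : d f * m * e = r := by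
  have hdf := congrArg d hf
  rw [d.leibniz, smul_eq_mul, smul_eq_mul, hdm, hdn] at hdf
  refine mul_right_cancel₀ hm ?_
  linear_combination e * m * hdf + (n' * m - m' * f * m) * hdk - u * m' * hf + h

variable {k q s : A}

theorem derivation_parameter [CharZero A] (hk3 : k ^ 2 + 3 ≠ 0)
    (hs : 256 * k ^ 6 * s = (k ^ 2 + 3) ^ 3 * (k ^ 2 - 1)) (hds : d s = 2 * s) :
    d k * (k ^ 2 - 3) ^ 2 = k * (k ^ 2 + 3) * (k ^ 2 - 1) := by
  have hdiff := congrArg d hs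
  simp only [d.leibniz, d.leibniz_pow, map_add, map_sub, derivation_ofNat, d.map_one_eq_zero,
    smul_eq_mul, nsmul_eq_mul, hds] at hdiff
  push_cast at hdiff
  have h2 : 2 * (k ^ 2 + 3) ^ 2 ≠ 0 := mul_ne_zero two_ne_zero (pow_ne_zero 2 hk3)
  refine mul_left_cancel₀ h2 ?_
  linear_combination (6 * d k + 2 * k) * hs - k * hdiff

theorem derivation_parametrized
    (hm : (k + 1) * (k ^ 2 + 3) ^ 3 ≠ 0) (he : (k ^ 2 - 3) ^ 2 ≠ 0)
    (hdk : d k * (k ^ 2 - 3) ^ 2 = k * (k ^ 2 + 3) * (k ^ 2 - 1))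
    (hq : q * ((k + 1) * (k ^ 2 + 3) ^ 3) = 32 * k ^ 3 * (k ^ 3 - 3 * k ^ 2 + 3 * k + 3)) :
    d q * ((k + 1) * (k ^ 2 + 3) ^ 3) = k ^ 3 * (k - 1) * (96 + 192 * k - 32 * k ^ 2) := by
  refine mul_right_cancel₀ he (derivation_quotient d
    (n' := 32 * (6 * k ^ 5 - 15 * k ^ 4 + 12 * k ^ 3 + 9 * k ^ 2)) hm hq
    (derivation_denominator d k) ?_ hdk (by ring))
  simp only [d.leibniz, d.leibniz_pow, map_add, map_sub, derivation_ofNat, smul_eq_mul,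
    nsmul_eq_mul]
  push_cast
  ring

theorem derivation_derivation_parametrized
    (hm : (k + 1) * (k ^ 2 + 3) ^ 3 ≠ 0) (he : (k ^ 2 - 3) ^ 2 ≠ 0)
    (hdk : d k * (k ^ 2 - 3) ^ 2 = k * (k ^ 2 + 3) * (k ^ 2 - 1))
    (hq : q * ((k + 1) * (k ^ 2 + 3) ^ 3) = 32 * k ^ 3 * (k ^ 3 - 3 * k ^ 2 + 3 * k + 3)) :
    d (d q) * ((k + 1) * (k ^ 2 + 3) ^ 3) * (k ^ 2 - 3) ^ 2 =
      k ^ 3 * (k - 1) * (-864 - 1728 * k + 2784 * k ^ 2 + 2688 * k ^ 3 - 416 * k ^ 4 -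
        448 * k ^ 5 + 32 * k ^ 6) := by
  refine derivation_quotient d
    (n' := -384 * k ^ 3 - 288 * k ^ 2 + 1120 * k ^ 4 - 192 * k ^ 5) hm
    (derivation_parametrized d hm he hdk hq) (derivation_denominator d k) ?_ hdk (by ring)
  simp only [d.leibniz, d.leibniz_pow, map_add, map_sub, derivation_ofNat, d.map_one_eq_zero,
    smul_eq_mul, nsmul_eq_mul]
  push_cast
  ring

theorem differential_equation_of_parametrization [CharZero A]
    (hm : (k + 1) * (k ^ 2 + 3) ^ 3 ≠ 0) (he : (k ^ 2 - 3) ^ 2 ≠ 0)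
    (hdk : d k * (k ^ 2 - 3) ^ 2 = k * (k ^ 2 + 3) * (k ^ 2 - 1))
    (hq : q * ((k + 1) * (k ^ 2 + 3) ^ 3) = 32 * k ^ 3 * (k ^ 3 - 3 * k ^ 2 + 3 * k + 3))
    (hk : k ≠ 0) (hs : 256 * k ^ 6 * s = (k ^ 2 + 3) ^ 3 * (k ^ 2 - 1)) :
    3 * d (d q) + 10 * d q + 8 * q = 8 + 16 * s * (3 * d (d q) + 8 * d q + 5 * q) := by
  have hq₁ := derivation_parametrized d hm he hdk hq
  have hq₂ := derivation_derivation_parametrized d hm he hdk hq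
  have hne : 256 * k ^ 6 * ((k + 1) * (k ^ 2 + 3) ^ 3 * (k ^ 2 - 3) ^ 2) ≠ 0 :=
    mul_ne_zero (mul_ne_zero (by norm_num) (pow_ne_zero 6 hk)) (mul_ne_zero hm he)
  refine mul_left_cancel₀ hne ?_
  linear_combination
    256 * k ^ 6 * ((3 - 48 * s) * hq₂ +
      (k ^ 2 - 3) ^ 2 * ((10 - 128 * s) * hq₁ + (8 - 80 * s) * hq)) -
    16 * (3 * (k ^ 3 * (k - 1) * (-864 - 1728 * k + 2784 * k ^ 2 + 2688 * k ^ 3 - 416 * k ^ 4 -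
        448 * k ^ 5 + 32 * k ^ 6)) +
      (k ^ 2 - 3) ^ 2 * (8 * (k ^ 3 * (k - 1) * (96 + 192 * k - 32 * k ^ 2)) +
        5 * (32 * k ^ 3 * (k ^ 3 - 3 * k ^ 2 + 3 * k + 3)))) * hs

open PowerSeries

/-- The Euler operator `X * d/dX`, in terms of which the differential equation of `axisSeries 0`
gives a two-term recurrence for the coefficients. -/
noncomputable def eulerDerivation (R : Type*) [CommRing R] : Derivation R R⟦X⟧ R⟦X⟧ :=
  (X : R⟦X⟧) • derivative R

@[simp]
theorem coeff_eulerDerivation {R : Type*} [CommRing R] (f : R⟦X⟧) (n : ℕ) :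
    coeff n (eulerDerivation R f) = n * coeff n f := by
  rw [eulerDerivation, Derivation.smul_apply, smul_eq_mul]
  cases n with
  | zero => simp
  | succ n =>
    rw [coeff_succ_X_mul, coeff_derivative, mul_comm]
    push_cast
    rfl

theorem axisSeries_differential_equation :
    3 * eulerDerivation ℚ (eulerDerivation ℚ (axisSeries 0)) +
      10 * eulerDerivation ℚ (axisSeries 0) + 8 * axisSeries 0 =
    8 + 16 * X ^ 2 * (3 * eulerDerivation ℚ (eulerDerivation ℚ (axisSeries 0)) +
      8 * eulerDerivation ℚ (axisSeries 0) + 5 * axisSeries 0) := by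
  have := algebraRat.charZero ℚ⟦X⟧
  obtain ⟨k, hk, hs, hq⟩ := exists_parametrization
  have hk0 : k ≠ 0 := ne_zero_of_map (hk ▸ one_ne_zero)
  have hk1 : constantCoeff (k + 1) ≠ 0 := by
    rw [map_add, map_one, hk]
    norm_num
  have hk3 : constantCoeff (k ^ 2 + 3) ≠ 0 := by
    rw [map_add, map_pow, constantCoeff_ofNat, hk]
    norm_num
  have hk3' : constantCoeff (k ^ 2 - 3) ≠ 0 := by
    rw [map_sub, map_pow, constantCoeff_ofNat, hk]
    norm_num
  have hX : eulerDerivation ℚ (X ^ 2) = 2 * X ^ 2 := by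
    rw [← map_ofNat C 2]
    ext n
    rw [coeff_C_mul, coeff_eulerDerivation, coeff_X_pow]
    split_ifs with hn <;> simp [hn]
  exact differential_equation_of_parametrization _
    (mul_ne_zero (ne_zero_of_map hk1) (pow_ne_zero 3 (ne_zero_of_map hk3)))
    (pow_ne_zero 2 (ne_zero_of_map hk3'))
    (derivation_parameter _ (ne_zero_of_map hk3) hs hX) hq hk0 hs

end DifferentialEquation

section Recurrence

open PowerSeries

theorem walkCount_recurrence (n : ℕ) : (n + 4) * (3 * n + 10) * walkCount (n + 2) 0 0 =
    16 * (n + 1) * (3 * n + 5) * walkCount n 0 0 := by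
  have h := congrArg (coeff (n + 2)) axisSeries_differential_equation
  have hC (m : ℕ) [m.AtLeastTwo] : (ofNat(m) : ℚ⟦X⟧) = C (OfNat.ofNat m) := (map_ofNat C m).symm
  rw [hC 16, mul_comm (C _), mul_assoc] at h
  simp only [hC, map_add, coeff_C_mul, coeff_X_pow_mul, coeff_eulerDerivation, axisSeries,
    coeff_mk, coeff_C, Nat.succ_ne_zero (n + 1), if_false] at h
  push_cast at h
  linear_combination h

theorem walkCount_two_mul (n : ℕ) : walkCount (2 * n) 0 0 =
    16 ^ n * (ascPochhammer ℚ n).eval (5 / 6) * (ascPochhammer ℚ n).eval (1 / 2) /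
      ((ascPochhammer ℚ n).eval 2 * (ascPochhammer ℚ n).eval (5 / 3)) := by
  induction n with
  | zero => simp [walkCount_zero]
  | succ n ih =>
    have h := walkCount_recurrence (2 * n)
    have h₂ : (ascPochhammer ℚ n).eval 2 ≠ 0 := (ascPochhammer_pos n _ (by norm_num)).ne'
    have h₅ : (ascPochhammer ℚ n).eval (5 / 3) ≠ 0 := (ascPochhammer_pos n _ (by norm_num)).ne'
    have h₂' : (2 + n : ℚ) ≠ 0 := by positivity
    have hne : (12 * (2 + n) * (5 / 3 + n) : ℚ) ≠ 0 := by positivity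
    simp only [ascPochhammer_succ_eval]
    rw [mul_mul_mul_comm, mul_add_one 2 n]
    refine mul_left_cancel₀ hne ?_
    calc (12 * (2 + n) * (5 / 3 + n) : ℚ) * walkCount (2 * n + 2) 0 0
        = 16 * (2 * n + 1) * (6 * n + 5) * walkCount (2 * n) 0 0 := by
          push_cast at h
          linear_combination h
      _ = _ := by
          rw [ih]
          field_simp
          ring

end Recurrence

end Gessel

theorem gessel_conjecture :
    (∀ n : ℕ, (qpWalks {(-1,0), (1,0), (-1,-1), (1,1)} (2 * n) (0, 0) : ℚ) =
        16 ^ n * (ascPochhammer ℚ n).eval (5/6) * (ascPochhammer ℚ n).eval (1/2) /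
          ((ascPochhammer ℚ n).eval 2 * (ascPochhammer ℚ n).eval (5/3))) ∧
    (∀ m : ℕ, Odd m → qpWalks {(-1,0), (1,0), (-1,-1), (1,1)} m (0, 0) = 0) := by
  have hS : ({(-1, 0), (1, 0), (-1, -1), (1, 1)} : Set (ℤ × ℤ)) = Gessel.gesselSteps := by simp
  rw [hS]
  exact ⟨Gessel.walkCount_two_mul, fun m => Gessel.qpWalks_gesselSteps_odd⟩
end
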